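/- arXiv:1001.2175 — 3 statements merged into one kernel-verified Lean document; each statement's English description precedes it below -/
import Mathlib

section
/- Let K be a commutative semiring with 0 ≠ 1 that is locally finite, or let K be a commutative ring, and let S : NW(Δ) → K be a regular nested word series whose image S(NW(Δ)) ⊆ K is finite. Then for every subset A ⊆ K the language S⁻¹(A) = {nw ∈ NW(Δ) : (S,nw) ∈ A} is a regular nested word language. -/
/-! ### Nested words and weighted nested word automata -/

/-- A nesting relation of width `n` (positions `1,…,n`). -/
def IsNestingRel (n : ℕ) (ν : ℕ → ℕ → Prop) : Prop :=
  (∀ i j, ν i j → 1 ≤ i ∧ i < j ∧ j ≤ n) ∧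
  (∀ i j j', ν i j → ν i j' → j = j') ∧
  (∀ i i' j, ν i j → ν i' j → i = i') ∧
  (∀ i j i' j', ν i j → ν i' j' → i < i' → j < i' ∨ j' < j)

/-- A nested word over `Δ`: a nonempty word together with a nesting relation. -/
structure NestedWord (Δ : Type) : Type where
  word : List Δ
  ne : word ≠ []
  rel : ℕ → ℕ → Prop
  isNest : IsNestingRel word.length rel

namespace NestedWord

variable {Δ : Type} (nw : NestedWord Δ)

/-- The length of the nested word. -/
def len : ℕ := nw.word.length

/-- The letter at (1-based) position `j`. -/
def letter (j : ℕ) : Δ := nw.word.getD (j - 1) (nw.word.head nw.ne)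

def IsCall (j : ℕ) : Prop := ∃ i, nw.rel j i
def IsReturn (j : ℕ) : Prop := ∃ i, nw.rel i j
def IsInternal (j : ℕ) : Prop :=
  1 ≤ j ∧ j ≤ nw.len ∧ ¬ nw.IsCall j ∧ ¬ nw.IsReturn j

/-- The nesting depth of position `k`: the number of arches open at `k`. -/
noncomputable def depth (k : ℕ) : ℕ :=
  Set.ncard {p : ℕ × ℕ | nw.rel p.1 p.2 ∧ p.1 ≤ k ∧ k ≤ p.2}

end NestedWord

/-- Clamp a function on `Fin (n+1)` to a function on `ℕ`. -/
def clampFun {Q : Type} {n : ℕ} (r : Fin (n + 1) → Q) : ℕ → Q :=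
  fun k => r ⟨min k n, Nat.lt_succ_of_le (min_le_right _ _)⟩

/-- A weighted nested word automaton over the commutative semiring `K`. -/
structure WNWA (K Δ : Type) [CommSemiring K] : Type 1 where
  Q : Type
  [fintQ : Fintype Q]
  ι : Q → K
  δcall : Q → Δ → Q → K
  δint : Q → Δ → Q → K
  δret : Q → Q → Δ → Q → K
  κ : Q → K

attribute [instance] WNWA.fintQ

namespace WNWA

variable {K Δ : Type} [CommSemiring K]

open Classical in
/-- The weight contributed by position `j` in a run `ρ`. -/
noncomputable def posWeight (A : WNWA K Δ) (nw : NestedWord Δ) (ρ : ℕ → A.Q) (j : ℕ) : K :=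
  if nw.IsCall j then A.δcall (ρ (j - 1)) (nw.letter j) (ρ j)
  else if h : nw.IsReturn j then
    A.δret (ρ (j - 1)) (ρ (h.choose - 1)) (nw.letter j) (ρ j)
  else A.δint (ρ (j - 1)) (nw.letter j) (ρ j)

/-- The weight of a run. -/
noncomputable def runWeight (A : WNWA K Δ) (nw : NestedWord Δ) (ρ : ℕ → A.Q) : K :=
  ∏ j ∈ Finset.Icc 1 nw.len, A.posWeight nw ρ j

/-- The behavior of a weighted nested word automaton. -/
noncomputable def behavior (A : WNWA K Δ) (nw : NestedWord Δ) : K :=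
  ∑ r : Fin (nw.len + 1) → A.Q,
    A.ι (r 0) * A.runWeight nw (clampFun r) * A.κ (r (Fin.last _))

end WNWA

/-- A nested word series is regular if it is the behavior of some WNWA. -/
def NWRegular {K Δ : Type} [CommSemiring K] (S : NestedWord Δ → K) : Prop :=
  ∃ A : WNWA K Δ, ∀ nw, A.behavior nw = S nw
/-! ### Unweighted nested word automata and regular nested word languages -/

/-- An (unweighted) nested word automaton. -/
structure NWA (Δ : Type) : Type 1 where
  Q : Type
  [fintQ : Fintype Q]
  ι : Q → Prop
  κ : Q → Prop
  δcall : Q → Δ → Q → Prop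
  δint : Q → Δ → Q → Prop
  δret : Q → Q → Δ → Q → Prop

attribute [instance] NWA.fintQ

/-- Acceptance of a nested word by a nested word automaton. -/
def NWA.accepts {Δ : Type} (A : NWA Δ) (nw : NestedWord Δ) : Prop :=
  ∃ r : Fin (nw.len + 1) → A.Q,
    A.ι (r 0) ∧ A.κ (r (Fin.last _)) ∧
    ∀ j, 1 ≤ j → j ≤ nw.len →
      (nw.IsCall j →
        A.δcall (clampFun r (j - 1)) (nw.letter j) (clampFun r j)) ∧
      (∀ i, nw.rel i j →
        A.δret (clampFun r (j - 1)) (clampFun r (i - 1)) (nw.letter j) (clampFun r j)) ∧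
      (nw.IsInternal j →
        A.δint (clampFun r (j - 1)) (nw.letter j) (clampFun r j))

/-- A regular language of nested words. -/
def NWLangRegular {Δ : Type} (L : Set (NestedWord Δ)) : Prop :=
  ∃ A : NWA Δ, ∀ nw, A.accepts nw ↔ nw ∈ L
/-- `K` is locally finite: every finitely generated subsemiring is finite. -/
def LocallyFiniteSemiring (K : Type) [CommSemiring K] : Prop :=
  ∀ s : Finset K, ((Subsemiring.closure (s : Set K) : Subsemiring K) : Set K).Finite

namespace NWTree

/-- Trees describing well-matched (possibly empty) nested words. -/
inductive W (Δ : Type) : Type where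
  | nil : W Δ
  | int : W Δ → Δ → W Δ
  | arch : W Δ → Δ → W Δ → Δ → W Δ

variable {Δ : Type}

/-- Length of the nested word described by a tree. -/
def W.size : W Δ → ℕ
  | .nil => 0
  | .int w _ => w.size + 1
  | .arch w _ v _ => w.size + v.size + 2

/-- Underlying word. -/
def W.word : W Δ → List Δ
  | .nil => []
  | .int w a => w.word ++ [a]
  | .arch w a v b => w.word ++ (a :: (v.word ++ [b]))

/-- Nesting relation, shifted by an offset. -/
def W.rel : W Δ → ℕ → ℕ → ℕ → Prop
  | .nil, _, _, _ => False
  | .int w _, o, i, j => w.rel o i j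
  | .arch w _ v _, o, i, j => w.rel o i j ∨
      (i = o + w.size + 1 ∧ j = o + w.size + v.size + 2) ∨ v.rel (o + w.size + 1) i j

theorem W.word_length (w : W Δ) : w.word.length = w.size := by
  induction w with
  | nil => rfl
  | int w a ih => simp [word, size, ih]
  | arch w a v b ih1 ih2 => simp [word, size, ih1, ih2]; omega

theorem W.rel_range (w : W Δ) : ∀ o i j, w.rel o i j → o < i ∧ i < j ∧ j ≤ o + w.size := by
  induction w with
  | nil => intro o i j h; exact h.elim
  | int w a ih =>
    intro o i j h
    have := ih o i j h
    simp only [size]; omega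
  | arch w a v b ih1 ih2 =>
    intro o i j h
    simp only [size]
    rcases h with h | h | h
    · have := ih1 _ _ _ h; omega
    · omega
    · have := ih2 _ _ _ h; omega

theorem W.rel_nest (w : W Δ) : ∀ o,
    (∀ i j j', w.rel o i j → w.rel o i j' → j = j') ∧
    (∀ i i' j, w.rel o i j → w.rel o i' j → i = i') ∧
    (∀ i j i' j', w.rel o i j → w.rel o i' j' → i < i' → j < i' ∨ j' < j) := by
  induction w with
  | nil => intro o; simp [rel]
  | int w a ih => intro o; exact ih o
  | arch w a v b ih1 ih2 =>
    intro o
    obtain ⟨a1, a2, a3⟩ := ih1 o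
    obtain ⟨b1, b2, b3⟩ := ih2 (o + w.size + 1)
    have r1 := w.rel_range o
    have r2 := v.rel_range (o + w.size + 1)
    refine ⟨?_, ?_, ?_⟩
    · rintro i j j' (h | h | h) (h' | h' | h')
      · exact a1 _ _ _ h h'
      · have := r1 _ _ h; omega
      · have := r1 _ _ h; have := r2 _ _ h'; omega
      · have := r1 _ _ h'; omega
      · omega
      · have := r2 _ _ h'; omega
      · have := r1 _ _ h'; have := r2 _ _ h; omega
      · have := r2 _ _ h; omega
      · exact b1 _ _ _ h h'
    · rintro i j j' (h | h | h) (h' | h' | h')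
      · exact a2 _ _ _ h h'
      · have := r1 _ _ h; omega
      · have := r1 _ _ h; have := r2 _ _ h'; omega
      · have := r1 _ _ h'; omega
      · omega
      · have := r2 _ _ h'; omega
      · have := r1 _ _ h'; have := r2 _ _ h; omega
      · have := r2 _ _ h; omega
      · exact b2 _ _ _ h h'
    · rintro i j i' j' (h | h | h) (h' | h' | h') hl
      · exact a3 _ _ _ _ h h' hl
      · have := r1 _ _ h; omega
      · have := r1 _ _ h; have := r2 _ _ h'; omega
      · have := r1 _ _ h'; omega
      · omega
      · have := r2 _ _ h'; omega
      · have := r1 _ _ h'; have := r2 _ _ h; omega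
      · have := r2 _ _ h; omega
      · have hres := b3 _ _ _ _ h h' hl
        exact hres

/-- The tree `w` describes the factor of `nw` starting after position `o`. -/
def Emb (nw : NestedWord Δ) : ℕ → W Δ → Prop
  | _, .nil => True
  | o, .int w a => Emb nw o w ∧ nw.letter (o + w.size + 1) = a ∧
      ¬ nw.IsCall (o + w.size + 1) ∧ ¬ nw.IsReturn (o + w.size + 1)
  | o, .arch w a v b => Emb nw o w ∧ Emb nw (o + w.size + 1) v ∧
      nw.letter (o + w.size + 1) = a ∧ nw.letter (o + w.size + v.size + 2) = b ∧
      nw.rel (o + w.size + 1) (o + w.size + v.size + 2)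

theorem emb_of_rel (nw : NestedWord Δ) (w : W Δ) : ∀ o,
    (∀ k, (h : k < w.word.length) → nw.letter (o + k + 1) = w.word[k]) →
    (∀ i j, (o < i ∧ i ≤ o + w.size) ∨ (o < j ∧ j ≤ o + w.size) →
      (nw.rel i j ↔ w.rel o i j)) → Emb nw o w := by
  induction w with
  | nil => intros; trivial
  | int w a ih =>
    intro o hl hr
    have hwl := w.word_length
    have r1 := w.rel_range o
    refine ⟨ih o ?_ ?_, ?_, ?_, ?_⟩
    · intro k hk
      rw [hl k (by simp [W.word]; omega)]
      simp [W.word, List.getElem_append_left hk]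
    · intro i j hij
      exact hr i j (by simp only [W.size]; omega)
    · rw [hl w.size (by simp [W.word]; omega)]
      simp [W.word, ← hwl]
    · rintro ⟨j, hj⟩
      rw [hr _ _ (by simp only [W.size]; omega)] at hj
      have := r1 _ _ hj
      omega
    · rintro ⟨j, hj⟩
      rw [hr _ _ (by simp only [W.size]; omega)] at hj
      have := r1 _ _ hj
      omega
  | arch w a v b ih1 ih2 =>
    intro o hl hr
    have hwl := w.word_length
    have hvl := v.word_length
    have r1 := w.rel_range o
    have r2 := v.rel_range (o + w.size + 1)
    refine ⟨ih1 o ?_ ?_, ih2 _ ?_ ?_, ?_, ?_, ?_⟩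
    · intro k hk
      rw [hl k (by simp [W.word]; omega)]
      simp [W.word, List.getElem_append_left hk]
    · intro i j hij
      rw [hr i j (by simp only [W.size]; omega)]
      constructor
      · rintro (h | h | h)
        · exact h
        · omega
        · have := r2 _ _ h; omega
      · intro h; exact Or.inl h
    · intro k hk
      have := hl (w.size + 1 + k) (by simp [W.word]; omega)
      rw [show o + w.size + 1 + k + 1 = o + (w.size + 1 + k) + 1 by omega, this]
      simp only [W.word]
      rw [List.getElem_append_right (by omega)]
      rw [List.getElem_cons, dif_neg (by omega), List.getElem_append_left (by omega)]
      congr 1; omega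
    · intro i j hij
      rw [hr i j (by simp only [W.size]; omega)]
      constructor
      · rintro (h | h | h)
        · have := r1 _ _ h; omega
        · omega
        · exact h
      · intro h; exact Or.inr (Or.inr h)
    · rw [hl w.size (by simp [W.word]; omega)]
      simp [W.word, ← hwl]
    · have := hl (w.size + 1 + v.size) (by simp [W.word]; omega)
      rw [show o + w.size + v.size + 2 = o + (w.size + 1 + v.size) + 1 by omega, this]
      simp only [W.word]
      rw [List.getElem_append_right (by omega)]
      rw [List.getElem_cons, dif_neg (by omega), List.getElem_append_right (by omega)]
      simp
    · rw [hr _ _ (by simp only [W.size]; omega)]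
      exact Or.inr (Or.inl ⟨rfl, rfl⟩)

/-- Every nonempty tree is realised by a nested word. -/
theorem exists_nw (w : W Δ) (hw : w.size ≠ 0) :
    ∃ nw : NestedWord Δ, nw.len = w.size ∧ Emb nw 0 w := by
  have hl := w.word_length
  have hr := w.rel_range 0
  obtain ⟨h1, h2, h3⟩ := w.rel_nest 0
  refine ⟨⟨w.word, ?_, w.rel 0, ?_, h1, h2, h3⟩, hl, ?_⟩
  · intro h; rw [h] at hl; simp at hl; omega
  · intro i j h; have := hr i j h; omega
  · apply emb_of_rel
    · intro k hk
      simp [NestedWord.letter, hk]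
    · intro i j _; rfl

theorem exists_tree_seg (nw : NestedWord Δ) : ∀ n o, o + n ≤ nw.len →
    (∀ i j, nw.rel i j → ((o < i ∧ i ≤ o + n) ↔ (o < j ∧ j ≤ o + n))) →
    ∃ w : W Δ, w.size = n ∧ Emb nw o w := by
  obtain ⟨hr, hu1, hu2, hx⟩ := nw.isNest
  intro n
  induction n using Nat.strong_induction_on with
  | _ n ih =>
  intro o hn hcl
  rcases n with _ | n
  · exact ⟨.nil, rfl, trivial⟩
  have hnc : ¬ nw.IsCall (o + n + 1) := by
    rintro ⟨j, hj⟩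
    have := hcl _ _ hj
    have := hr _ _ hj
    omega
  by_cases hret : nw.IsReturn (o + n + 1)
  · obtain ⟨i, hi⟩ := hret
    have hi1 := hcl _ _ hi
    have hi2 := hr _ _ hi
    obtain ⟨w, hw, ew⟩ := ih (i - 1 - o) (by omega) o (by omega) (by
      intro i' j' h
      have c1 := hcl _ _ h
      have c2 := hr _ _ h
      rcases lt_trichotomy i i' with hlt | heq | hgt
      · have := hx _ _ _ _ hi h hlt; omega
      · subst heq; have := hu1 _ _ _ hi h; omega
      · have := hx _ _ _ _ h hi hgt; omega)
    obtain ⟨v, hv, ev⟩ := ih (n - (i - o)) (by omega) i (by omega) (by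
      intro i' j' h
      have c1 := hcl _ _ h
      have c2 := hr _ _ h
      rcases lt_trichotomy i i' with hlt | heq | hgt
      · have := hx _ _ _ _ hi h hlt; omega
      · subst heq; have := hu1 _ _ _ hi h; omega
      · have := hx _ _ _ _ h hi hgt; omega)
    have e1 : o + w.size + 1 = i := by omega
    have e2 : o + w.size + v.size + 2 = o + n + 1 := by omega
    refine ⟨.arch w (nw.letter i) v (nw.letter (o + n + 1)), by simp only [W.size]; omega, ew, ?_, ?_, ?_, ?_⟩
    · rw [e1]; exact ev
    · rw [e1]
    · rw [e2]
    · rw [e1, e2]; exact hi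
  · obtain ⟨w, hw, ew⟩ := ih n (by omega) o (by omega) (by
      intro i' j' h
      have c1 := hcl _ _ h
      have c2 := hr _ _ h
      have : i' ≠ o + n + 1 := by rintro rfl; exact hnc ⟨_, h⟩
      have : j' ≠ o + n + 1 := by rintro rfl; exact hret ⟨_, h⟩
      omega)
    subst hw
    exact ⟨.int w (nw.letter (o + w.size + 1)), rfl, ew, rfl, hnc, hret⟩

theorem exists_tree (nw : NestedWord Δ) : ∃ w : W Δ, w.size = nw.len ∧ Emb nw 0 w := by
  apply exists_tree_seg nw nw.len 0 (by omega)
  intro i j h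
  have := nw.isNest.1 i j h
  simp only [NestedWord.len]
  omega

theorem not_call_of_return (nw : NestedWord Δ) {i j : ℕ} (h : nw.rel i j) : ¬ nw.IsCall j := by
  rintro ⟨k, hk⟩
  obtain ⟨hr, hu1, hu2, hx⟩ := nw.isNest
  have a := hr _ _ h
  have b := hr _ _ hk
  have := hx _ _ _ _ h hk a.2.1
  omega

/-! ### Weights -/

variable {K : Type} [CommSemiring K]

/-- Weight of a tree along a run. -/
def P (A : WNWA K Δ) : W Δ → ℕ → (ℕ → A.Q) → K
  | .nil, _, _ => 1
  | .int w a, o, ρ => P A w o ρ * A.δint (ρ (o + w.size)) a (ρ (o + w.size + 1))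
  | .arch w a v b, o, ρ => P A w o ρ * (A.δcall (ρ (o + w.size)) a (ρ (o + w.size + 1)) *
      (P A v (o + w.size + 1) ρ *
       A.δret (ρ (o + w.size + 1 + v.size)) (ρ (o + w.size)) b (ρ (o + w.size + v.size + 2))))

theorem posWeight_call (A : WNWA K Δ) (nw : NestedWord Δ) (ρ : ℕ → A.Q) {i j : ℕ}
    (h : nw.rel i j) :
    A.posWeight nw ρ i = A.δcall (ρ (i - 1)) (nw.letter i) (ρ i) := by
  have : nw.IsCall i := ⟨_, h⟩
  simp [WNWA.posWeight, this]

theorem posWeight_ret (A : WNWA K Δ) (nw : NestedWord Δ) (ρ : ℕ → A.Q) {i j : ℕ}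
    (h : nw.rel i j) :
    A.posWeight nw ρ j = A.δret (ρ (j - 1)) (ρ (i - 1)) (nw.letter j) (ρ j) := by
  have h1 : nw.IsReturn j := ⟨_, h⟩
  have h2 := not_call_of_return nw h
  have h3 : h1.choose = i := nw.isNest.2.2.1 _ _ _ h1.choose_spec h
  simp [WNWA.posWeight, h1, h2, h3]

theorem posWeight_int (A : WNWA K Δ) (nw : NestedWord Δ) (ρ : ℕ → A.Q) {j : ℕ}
    (h1 : ¬ nw.IsCall j) (h2 : ¬ nw.IsReturn j) :
    A.posWeight nw ρ j = A.δint (ρ (j - 1)) (nw.letter j) (ρ j) := by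
  simp [WNWA.posWeight, h1, h2]

theorem prod_eq_P (A : WNWA K Δ) (nw : NestedWord Δ) (ρ : ℕ → A.Q) (w : W Δ) : ∀ o,
    Emb nw o w → ∏ k ∈ Finset.range w.size, A.posWeight nw ρ (o + k + 1) = P A w o ρ := by
  induction w with
  | nil => intro o _; simp [W.size, P]
  | int w a ih =>
    rintro o ⟨h1, h2, h3, h4⟩
    rw [W.size, Finset.prod_range_succ, ih o h1, P, posWeight_int A nw ρ h3 h4, h2]
    rfl
  | arch w a v b ih1 ih2 =>
    rintro o ⟨h1, h2, h3, h4, h5⟩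
    rw [W.size, show w.size + v.size + 2 = w.size + (1 + v.size + 1) by omega,
      Finset.prod_range_add, ih1 o h1, P, Finset.prod_range_succ, Finset.prod_range_add, ← ih2 _ h2]
    have e1 := posWeight_call A nw ρ h5
    have e2 := posWeight_ret A nw ρ h5
    rw [h3] at e1
    rw [h4] at e2
    simp only [Finset.range_one, Finset.prod_singleton, Nat.add_zero, e1]
    rw [show o + (w.size + (1 + v.size)) + 1 = o + w.size + v.size + 2 by omega, e2]
    rw [show o + w.size + v.size + 2 - 1 = o + w.size + 1 + v.size by omega]
    simp only [Nat.add_sub_cancel, mul_assoc]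
    congr 3
    apply Finset.prod_congr rfl
    intro k _
    congr 1
    omega

theorem runWeight_eq_P (A : WNWA K Δ) (nw : NestedWord Δ) (ρ : ℕ → A.Q) (w : W Δ)
    (hs : w.size = nw.len) (hw : Emb nw 0 w) : A.runWeight nw ρ = P A w 0 ρ := by
  rw [← prod_eq_P A nw ρ w 0 hw, WNWA.runWeight, hs, Finset.range_eq_Ico]
  simp only [Nat.zero_add]
  rw [Finset.prod_Ico_add' (fun j => A.posWeight nw ρ j) 0 nw.len 1]
  rfl

/-- Sum over all values of the run at positions `o+1, …, o+n`. -/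
def Ex {Q : Type} [Fintype Q] : ℕ → ℕ → ((ℕ → Q) → K) → (ℕ → Q) → K
  | 0, _, F, ρ => F ρ
  | n + 1, o, F, ρ => ∑ q : Q, Ex n (o + 1) F (Function.update ρ (o + 1) q)

section Ex
variable {Q : Type} [Fintype Q]

theorem Ex_congr (F G : (ℕ → Q) → K) : ∀ n o ρ,
    (∀ ρ' : ℕ → Q, (∀ k ≤ o, ρ' k = ρ k) → F ρ' = G ρ') → Ex n o F ρ = Ex n o G ρ := by
  intro n
  induction n with
  | zero => intro o ρ h; exact h ρ (fun _ _ => rfl)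
  | succ n ih =>
    intro o ρ h
    apply Finset.sum_congr rfl
    intro q _
    apply ih
    intro ρ' h'
    apply h
    intro k hk
    rw [h' k (by omega), Function.update_of_ne (by omega)]

theorem Ex_mul (c : K) (F : (ℕ → Q) → K) : ∀ n o ρ,
    Ex n o (fun ρ => c * F ρ) ρ = c * Ex n o F ρ := by
  intro n
  induction n with
  | zero => intro o ρ; rfl
  | succ n ih => intro o ρ; simp only [Ex, ih, Finset.mul_sum]

theorem Ex_add (F : (ℕ → Q) → K) (m : ℕ) : ∀ n o ρ,
    Ex (n + m) o F ρ = Ex n o (Ex m (o + n) F) ρ := by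
  intro n
  induction n with
  | zero => intro o ρ; simp [Ex]
  | succ n ih =>
    intro o ρ
    rw [show n + 1 + m = (n + m) + 1 by omega]
    simp only [Ex, ih]
    rw [show o + 1 + n = o + (n + 1) by omega]

theorem sum_fin_eq_Ex (F : (ℕ → Q) → K) : ∀ n o (ρ : ℕ → Q),
    (∀ ρ ρ' : ℕ → Q, (∀ k ≤ o + n, ρ k = ρ' k) → F ρ = F ρ') →
    ∑ r : Fin n → Q, F (fun k => if h : o < k ∧ k ≤ o + n then r ⟨k - o - 1, by omega⟩ else ρ k)
      = Ex n o F ρ := by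
  intro n
  induction n with
  | zero =>
    intro o ρ h
    simp only [Ex, Finset.univ_unique, Finset.sum_singleton]
    apply h
    intro k hk
    rw [dif_neg (by omega)]
  | succ n ih =>
    intro o ρ h
    rw [← (Fin.consEquiv (fun _ => Q)).sum_comp, Fintype.sum_prod_type]
    apply Finset.sum_congr rfl
    intro q _
    rw [← ih (o + 1) _ (fun ρ ρ' hh => h ρ ρ' (fun k hk => hh k (by omega)))]
    apply Finset.sum_congr rfl
    intro r _
    congr 1
    funext k
    by_cases h1 : o < k ∧ k ≤ o + (n + 1)
    · rw [dif_pos h1]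
      by_cases h2 : k = o + 1
      · subst h2
        rw [dif_neg (by omega), Function.update_self]
        simp [Fin.consEquiv]
      · rw [dif_pos (by omega)]
        have : (⟨k - o - 1, by omega⟩ : Fin (n + 1)) = Fin.succ ⟨k - (o + 1) - 1, by omega⟩ := by
          ext; simp; omega
        rw [this]
        rfl
    · rw [dif_neg h1, dif_neg (by omega), Function.update_of_ne (by omega)]

end Ex

/-- Effect of appending an internal letter on matrices. -/
def intL (A : WNWA K Δ) (a : Δ) : (A.Q × A.Q → K) →ₗ[K] (A.Q × A.Q → K) where
  toFun m := fun x => ∑ r, m (x.1, r) * A.δint r a x.2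
  map_add' m m' := by funext x; simp [add_mul, Finset.sum_add_distrib]
  map_smul' c m := by funext x; simp [Finset.mul_sum, mul_assoc]

/-- Effect of appending an arch on matrices. -/
def archF (A : WNWA K Δ) (a b : Δ) (m v : A.Q × A.Q → K) : A.Q × A.Q → K :=
  fun x => ∑ p, m (x.1, p) * ∑ r, A.δcall p a r * ∑ s, v (r, s) * A.δret s p b x.2

/-- `archF` as a linear map of its first argument. -/
def archL (A : WNWA K Δ) (a b : Δ) (v : A.Q × A.Q → K) :
    (A.Q × A.Q → K) →ₗ[K] (A.Q × A.Q → K) where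
  toFun m := archF A a b m v
  map_add' m m' := by funext x; simp [archF, add_mul, Finset.sum_add_distrib]
  map_smul' c m := by funext x; simp [archF, Finset.mul_sum, mul_assoc]

/-- `archF` as a linear map of its second argument. -/
def archR (A : WNWA K Δ) (a b : Δ) (m : A.Q × A.Q → K) :
    (A.Q × A.Q → K) →ₗ[K] (A.Q × A.Q → K) where
  toFun v := archF A a b m v
  map_add' v v' := by
    funext x; simp [archF, add_mul, mul_add, Finset.sum_add_distrib]
  map_smul' c v := by
    funext x
    simp only [archF, Finset.mul_sum, RingHom.id_apply, Pi.smul_apply, smul_eq_mul]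
    refine Finset.sum_congr rfl fun p _ => Finset.sum_congr rfl fun r _ =>
      Finset.sum_congr rfl fun s _ => ?_
    ring

open Classical in
/-- Matrix of a tree. -/
noncomputable def wM (A : WNWA K Δ) : W Δ → A.Q × A.Q → K
  | .nil => fun x => if x.1 = x.2 then 1 else 0
  | .int w a => intL A a (wM A w)
  | .arch w a v b => archF A a b (wM A w) (wM A v)

theorem P_congr (A : WNWA K Δ) (w : W Δ) : ∀ o (ρ ρ' : ℕ → A.Q),
    (∀ k, o ≤ k → k ≤ o + w.size → ρ k = ρ' k) → P A w o ρ = P A w o ρ' := by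
  induction w with
  | nil => intros; rfl
  | int w a ih =>
    intro o ρ ρ' h
    simp only [W.size] at h
    rw [P, P, ih o ρ ρ' (fun k h1 h2 => h k h1 (by omega)), h _ (by omega) (by omega),
      h (o + w.size + 1) (by omega) (by omega)]
  | arch w a v b ih1 ih2 =>
    intro o ρ ρ' h
    simp only [W.size] at h
    rw [P, P, ih1 o ρ ρ' (fun k h1 h2 => h k h1 (by omega)),
      ih2 _ ρ ρ' (fun k h1 h2 => h k (by omega) (by omega)), h (o + w.size) (by omega) (by omega),
      h (o + w.size + 1) (by omega) (by omega),
      h (o + w.size + 1 + v.size) (by omega) (by omega),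
      h (o + w.size + v.size + 2) (by omega) (by omega)]

theorem Ex_P (A : WNWA K Δ) (w : W Δ) : ∀ o (ρ : ℕ → A.Q) (h : A.Q → K),
    Ex w.size o (fun ρ' => P A w o ρ' * h (ρ' (o + w.size))) ρ
      = ∑ q, wM A w (ρ o, q) * h q := by
  induction w with
  | nil =>
    intro o ρ h
    classical
    simp only [W.size, Ex, P, wM, Nat.add_zero, one_mul, ite_mul, zero_mul]
    refine Eq.trans ?_ (Finset.sum_ite_eq _ _ _).symm
    simp
  | int w a ih =>
    intro o ρ h
    rw [W.size, Ex_add]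
    have e : ∀ ρ' : ℕ → A.Q,
        Ex 1 (o + w.size) (fun ρ' => P A (.int w a) o ρ' * h (ρ' (o + (w.size + 1)))) ρ'
        = P A w o ρ' * (fun p => ∑ q, A.δint p a q * h q) (ρ' (o + w.size)) := by
      intro ρ'
      simp only [Ex, P, Finset.mul_sum]
      refine Finset.sum_congr rfl fun q _ => ?_
      rw [P_congr A w o (Function.update ρ' (o + w.size + 1) q) ρ'
        (fun k h1 h2 => Function.update_of_ne (by omega) _ _),
        Function.update_of_ne (by omega), Function.update_self,
        show o + (w.size + 1) = o + w.size + 1 by omega, Function.update_self, mul_assoc]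
    rw [Ex_congr _ _ _ _ _ (fun ρ' _ => e ρ'), ih o ρ (fun p => ∑ q, A.δint p a q * h q)]
    simp only [wM, intL, LinearMap.coe_mk, AddHom.coe_mk, Finset.mul_sum, Finset.sum_mul]
    rw [Finset.sum_comm]
    simp only [mul_assoc]
  | arch w a v b ih1 ih2 =>
    intro o ρ h
    rw [W.size, show w.size + v.size + 2 = w.size + (1 + (v.size + 1)) by omega, Ex_add]
    have e : ∀ ρ' : ℕ → A.Q,
        Ex (1 + (v.size + 1)) (o + w.size) (fun ρ' => P A (.arch w a v b) o ρ' *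
          h (ρ' (o + (w.size + (1 + (v.size + 1)))))) ρ'
        = P A w o ρ' * (fun p => ∑ r, A.δcall p a r * ∑ s, wM A v (r, s) *
            ∑ q, A.δret s p b q * h q) (ρ' (o + w.size)) := by
      intro ρ'
      rw [Ex_add]
      have e1 : ∀ F : (ℕ → A.Q) → K, Ex 1 (o + w.size) F ρ' =
        ∑ r, F (Function.update ρ' (o + w.size + 1) r) := fun F => rfl
      rw [e1, Finset.mul_sum]
      refine Finset.sum_congr rfl fun r _ => ?_
      rw [Ex_add]
      generalize hρ : Function.update ρ' (o + w.size + 1) r = ρ1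
      have hk : ∀ k ≤ o + w.size, ρ1 k = ρ' k := by
        intro k hk; rw [← hρ, Function.update_of_ne (by omega)]
      have hr : ρ1 (o + w.size + 1) = r := by rw [← hρ, Function.update_self]
      have e2 : ∀ ρ2 : ℕ → A.Q, (∀ k ≤ o + w.size + 1, ρ2 k = ρ1 k) →
          Ex 1 (o + w.size + 1 + v.size) (fun ρ' => P A (.arch w a v b) o ρ' *
            h (ρ' (o + (w.size + (1 + (v.size + 1)))))) ρ2
          = (P A w o ρ' * A.δcall (ρ' (o + w.size)) a r) * (P A v (o + w.size + 1) ρ2 *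
             (fun s => ∑ q, A.δret s (ρ' (o + w.size)) b q * h q) (ρ2 (o + w.size + 1 + v.size))) := by
        intro ρ2 h2
        simp only [Ex, P, Finset.mul_sum]
        refine Finset.sum_congr rfl fun q _ => ?_
        rw [P_congr A w o (Function.update ρ2 (o + w.size + 1 + v.size + 1) q) ρ'
          (fun k h1 h3 => by
            rw [Function.update_of_ne (by omega), h2 k (by omega), hk k (by omega)]),
          P_congr A v _ (Function.update ρ2 (o + w.size + 1 + v.size + 1) q) ρ2
          (fun k h1 h3 => Function.update_of_ne (by omega) _ _),
          show o + (w.size + (1 + (v.size + 1))) = o + w.size + 1 + v.size + 1 by omega,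
          show o + w.size + v.size + 2 = o + w.size + 1 + v.size + 1 by omega,
          Function.update_self, Function.update_of_ne (by omega), Function.update_of_ne (by omega),
          Function.update_of_ne (by omega), h2 _ (by omega), h2 _ (by omega), hr, hk _ le_rfl]
        ring
      rw [Ex_congr _ _ _ _ _ e2, Ex_mul,
        ih2 _ _ (fun s => ∑ q, A.δret s (ρ' (o + w.size)) b q * h q), hr, mul_assoc]
    rw [Ex_congr _ _ _ _ _ (fun ρ' _ => e ρ'), ih1 o ρ (fun p => ∑ r, A.δcall p a r * ∑ s, wM A v (r, s) *
            ∑ q, A.δret s p b q * h q)]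
    simp only [wM, archF, Finset.mul_sum, Finset.sum_mul]
    symm
    rw [Finset.sum_comm]
    refine Finset.sum_congr rfl fun p _ => ?_
    rw [Finset.sum_comm]
    refine Finset.sum_congr rfl fun r _ => ?_
    rw [Finset.sum_comm]
    refine Finset.sum_congr rfl fun t _ => Finset.sum_congr rfl fun q _ => ?_
    ring

/-- Evaluation functional. -/
def evL (A : WNWA K Δ) : (A.Q × A.Q → K) →ₗ[K] K where
  toFun m := ∑ p, ∑ q, A.ι p * m (p, q) * A.κ q
  map_add' m m' := by simp [mul_add, add_mul, Finset.sum_add_distrib]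
  map_smul' c m := by
    simp only [Finset.mul_sum, RingHom.id_apply, Pi.smul_apply, smul_eq_mul]
    refine Finset.sum_congr rfl fun p _ => Finset.sum_congr rfl fun r _ => ?_
    ring

theorem behavior_eq (A : WNWA K Δ) (nw : NestedWord Δ) (w : W Δ)
    (hs : w.size = nw.len) (hw : Emb nw 0 w) : A.behavior nw = evL A (wM A w) := by
  have hrun := fun ρ => runWeight_eq_P A nw ρ w hs hw
  simp only [WNWA.behavior, hrun]
  rw [← (Fin.consEquiv (fun _ => A.Q)).sum_comp, Fintype.sum_prod_type]
  simp only [evL, LinearMap.coe_mk, AddHom.coe_mk]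
  refine Finset.sum_congr rfl fun p _ => ?_
  have h1 := Ex_P A w 0 (fun _ => p) A.κ
  rw [← sum_fin_eq_Ex _ w.size 0] at h1
  · simp only [mul_assoc, ← Finset.mul_sum]
    rw [← h1, hs, Finset.mul_sum]
    refine Finset.sum_congr rfl fun r _ => ?_
    have h0 : (Fin.consEquiv fun _ => A.Q) (p, r) 0 = p := rfl
    rw [h0]
    have hc : ∀ k ≤ nw.len, clampFun ((Fin.consEquiv fun _ => A.Q) (p, r)) k =
        if h : 0 < k ∧ k ≤ 0 + nw.len then r ⟨k - 0 - 1, by omega⟩ else p := by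
      intro k hk
      rcases k with _ | k
      · simp [clampFun]
      · rw [dif_pos (by omega)]
        have : (⟨min (k + 1) nw.len, by omega⟩ : Fin (nw.len + 1)) = Fin.succ ⟨k, by omega⟩ := by
          ext; simp; omega
        rw [clampFun, this]
        rfl
    congr 2
    · exact P_congr A w 0 _ _ (fun k _ h => hc k (by omega))
    · have := hc nw.len le_rfl
      simp only [Nat.zero_add] at this ⊢
      rw [← this, clampFun]
      have hlast : Fin.last nw.len = ⟨min nw.len nw.len, by omega⟩ := by ext; simp
      rw [← hlast]
  · intro ρ ρ' h
    rw [P_congr A w 0 ρ ρ' (fun k _ h' => h k h'), h _ le_rfl]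

/-! ### The syntactic congruence -/

/-- Context functionals. -/
inductive Ctx (A : WNWA K Δ) : ((A.Q × A.Q → K) →ₗ[K] K) → Prop where
  | base : Ctx A (evL A)
  | int {f} (a : Δ) : Ctx A f → Ctx A (f ∘ₗ intL A a)
  | left {f} (a b : Δ) (v : W Δ) : Ctx A f → Ctx A (f ∘ₗ archL A a b (wM A v))
  | right {f} (a b : Δ) (w : W Δ) : Ctx A f → Ctx A (f ∘ₗ archR A a b (wM A w))

theorem Ctx.eval {A : WNWA K Δ} {f} (hf : Ctx A f) :
    ∀ w : W Δ, ∃ w' : W Δ, f (wM A w) = evL A (wM A w') := by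
  induction hf with
  | base => exact fun w => ⟨w, rfl⟩
  | int a _ ih => exact fun w => ih (.int w a)
  | left a b v _ ih => exact fun w => ih (.arch w a v b)
  | right a b u _ ih => exact fun w => ih (.arch u a w b)

/-- Syntactic congruence. -/
def congS (A : WNWA K Δ) : Setoid (W Δ) where
  r w w' := ∀ f, Ctx A f → f (wM A w) = f (wM A w')
  iseqv := ⟨fun _ _ _ => rfl, fun h f hf => (h f hf).symm,
    fun h h' f hf => (h f hf).trans (h' f hf)⟩

/-- Syntactic classes. -/
def Cls (A : WNWA K Δ) : Type := Quotient (congS A)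

theorem finite_functionals {ι : Type} [Fintype ι] [IsNoetherian K (ι → K)]
    (F : Set ((ι → K) →ₗ[K] K)) : ∃ F0 : Set ((ι → K) →ₗ[K] K), F0.Finite ∧ F0 ⊆ F ∧
      ∀ m m', (∀ f ∈ F0, f m = f m') → ∀ f ∈ F, f m = f m' := by
  classical
  let φ : ((ι → K) →ₗ[K] K) → (ι → K) := fun f i => f (Pi.single i 1)
  have key : ∀ (f : (ι → K) →ₗ[K] K) m, f m = ∑ i, φ f i * m i := by
    intro f m
    rw [LinearMap.pi_apply_eq_sum_univ f m]
    refine Finset.sum_congr rfl fun i _ => ?_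
    simp only [φ, smul_eq_mul, mul_comm]
    congr 2
    funext j
    simp [Pi.single_apply, eq_comm]
  have hfg : (Submodule.span K (φ '' F)).FG := IsNoetherian.noetherian _
  rw [Submodule.fg_span_iff_fg_span_finset_subset] at hfg
  obtain ⟨s, hs, hspan⟩ := hfg
  have hch : ∀ x ∈ s, ∃ f ∈ F, φ f = x := fun x hx => hs hx
  choose! ψ hψ1 hψ2 using hch
  refine ⟨ψ '' s, s.finite_toSet.image _, ?_, ?_⟩
  · rintro _ ⟨x, hx, rfl⟩; exact hψ1 x hx
  · intro m m' h f hf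
    rw [key f m, key f m']
    have hmem : φ f ∈ Submodule.span K (s : Set (ι → K)) := by
      rw [← hspan]; exact Submodule.subset_span ⟨f, hf, rfl⟩
    generalize φ f = y at hmem
    induction hmem using Submodule.span_induction with
    | mem x hx =>
      have := h _ ⟨x, hx, rfl⟩
      rwa [key, key, hψ2 x hx] at this
    | zero => simp
    | add x y _ _ hx hy => simp only [Pi.add_apply, add_mul, Finset.sum_add_distrib, hx, hy]
    | smul c x _ hx => simp only [Pi.smul_apply, smul_eq_mul, mul_assoc, ← Finset.mul_sum, hx]

theorem cls_finite (A : WNWA K Δ) [IsNoetherian K (A.Q × A.Q → K)]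
    (hfin : (Set.range A.behavior).Finite) : Finite (Cls A) := by
  obtain ⟨F0, hF0, hsub, hF⟩ := finite_functionals {f | Ctx A f}
  have hV : (insert (evL A (wM A .nil)) (Set.range A.behavior)).Finite := hfin.insert _
  have hmem : ∀ f ∈ F0, ∀ w, f (wM A w) ∈ insert (evL A (wM A .nil)) (Set.range A.behavior) := by
    intro f hf w
    obtain ⟨w', hw'⟩ := (hsub hf).eval w
    rw [hw']
    by_cases h : w'.size = 0
    · cases w' with
      | nil => exact Or.inl rfl
      | int => simp [W.size] at h
      | arch => simp [W.size] at h
    · obtain ⟨nw, h1, h2⟩ := exists_nw w' h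
      exact Or.inr ⟨nw, behavior_eq A nw w' h1.symm h2⟩
  have := hF0.to_subtype
  have := hV.to_subtype
  let g : Cls A → (F0 → ↥(insert (evL A (wM A .nil)) (Set.range A.behavior))) :=
    Quotient.lift (fun w f => ⟨f.1 (wM A w), hmem f.1 f.2 w⟩) (by
      intro w w' h
      funext f
      exact Subtype.ext (h f.1 (hsub f.2)))
  apply Finite.of_injective g
  intro c c'
  induction c using Quotient.ind with | _ w => ?_
  induction c' using Quotient.ind with | _ w' => ?_
  intro h
  apply Quotient.sound
  intro f hf
  exact hF _ _ (fun f hf => congrArg Subtype.val (congrFun h ⟨f, hf⟩)) f hf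

/-- Class of a tree. -/
def cls (A : WNWA K Δ) (w : W Δ) : Cls A := Quotient.mk (congS A) w

def stepInt (A : WNWA K Δ) (a : Δ) : Cls A → Cls A :=
  Quotient.map (fun w => .int w a) (fun _ _ h f hf => h _ (hf.int a))

def stepArch (A : WNWA K Δ) (a b : Δ) : Cls A → Cls A → Cls A :=
  Quotient.map₂ (fun w v => .arch w a v b) (fun _ u₂ hu v₁ _ hv _ hf =>
    (hu _ (hf.left a b v₁)).trans (hv _ (hf.right a b u₂)))

/-- Action of a tree on classes. -/
def act (A : WNWA K Δ) : W Δ → Cls A → Cls A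
  | .nil, c => c
  | .int w a, c => stepInt A a (act A w c)
  | .arch w a v b, c => stepArch A a b (act A w c) (act A v (cls A .nil))

theorem act_nil (A : WNWA K Δ) (w : W Δ) : act A w (cls A .nil) = cls A w := by
  induction w with
  | nil => rfl
  | int w a ih => rw [act, ih]; rfl
  | arch w a v b ih1 ih2 => rw [act, ih1, ih2]; rfl

/-! ### The automaton -/

open Classical in
/-- 0/1 weighted version of an NWA. -/
noncomputable abbrev toW (B : NWA Δ) : WNWA ℕ Δ where
  Q := B.Q
  ι p := if B.ι p then 1 else 0
  κ p := if B.κ p then 1 else 0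
  δcall p a q := if B.δcall p a q then 1 else 0
  δint p a q := if B.δint p a q then 1 else 0
  δret p r a q := if B.δret p r a q then 1 else 0

theorem accepts_iff (B : NWA Δ) (nw : NestedWord Δ) :
    B.accepts nw ↔ (toW B).behavior nw ≠ 0 := by
  rw [WNWA.behavior, Ne, Finset.sum_eq_zero_iff]
  push Not
  simp only [Finset.mem_univ, true_and]
  apply exists_congr
  intro r
  simp only [ne_eq, mul_eq_zero, not_or, and_assoc]
  rw [and_comm (a := ¬ (toW B).runWeight nw (clampFun r) = 0)]
  refine and_congr (by simp [toW]) (and_congr (by simp [toW]) ?_)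
  rw [WNWA.runWeight, Finset.prod_eq_zero_iff]
  push Not
  simp only [Finset.mem_Icc, and_imp]
  refine forall_congr' fun j => forall_congr' fun h1 => forall_congr' fun h2 => ?_
  by_cases hc : nw.IsCall j
  · obtain ⟨k, hk⟩ := hc
    have hc : nw.IsCall j := ⟨k, hk⟩
    have hr : ∀ i, ¬ nw.rel i j := fun i hi => not_call_of_return nw hi hc
    rw [posWeight_call _ nw _ hk]
    simp [toW, hc, hr, NestedWord.IsInternal]
  · by_cases hr : nw.IsReturn j
    · obtain ⟨i, hi⟩ := hr
      have hr : nw.IsReturn j := ⟨i, hi⟩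
      have hu : ∀ i', nw.rel i' j ↔ i' = i :=
        fun i' => ⟨fun h => nw.isNest.2.2.1 _ _ _ h hi, fun h => h ▸ hi⟩
      rw [posWeight_ret _ nw _ hi]
      simp [toW, hc, hr, hu, NestedWord.IsInternal]
    · have hu : ∀ i', ¬ nw.rel i' j := fun i' h => hr ⟨_, h⟩
      rw [posWeight_int _ nw _ hc hr]
      simp [toW, hc, hr, hu, NestedWord.IsInternal, h1, h2]

/-- The syntactic automaton. -/
abbrev synA [Fintype Δ] (A : WNWA K Δ) (T : Set K) [Fintype (Cls A)] : NWA Δ where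
  Q := Cls A × Option Δ
  ι p := p = (cls A .nil, none)
  κ p := ∃ w, p.1 = cls A w ∧ evL A (wM A w) ∈ T
  δcall _ a q := q = (cls A .nil, some a)
  δint p a q := q = (stepInt A a p.1, p.2)
  δret p r b q := ∃ a, p.2 = some a ∧ q = (stepArch A a b r.1 p.1, r.2)

open Classical in
theorem wM_synA [Fintype Δ] (A : WNWA K Δ) (T : Set K) [Fintype (Cls A)] (w : W Δ) :
    ∀ (p q : Cls A × Option Δ),
    wM (toW (synA A T)) w (p, q) = if q = (act A w p.1, p.2) then 1 else 0 := by
  induction w with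
  | nil => intro p q; simp only [wM, act]; 
           by_cases h : p = q
           · exact (if_pos h).trans (if_pos h.symm).symm
           · exact (if_neg h).trans (if_neg (Ne.symm h)).symm
  | int w a ih =>
    intro p q
    simp only [wM, intL, LinearMap.coe_mk, AddHom.coe_mk]
    refine (Finset.sum_congr rfl fun r _ => congrArg (· * _) (ih p r)).trans ?_
    simp only [toW, synA, ite_mul, one_mul, zero_mul, act]
    refine (Finset.sum_ite_eq' _ _ _).trans ?_
    simp only [Finset.mem_univ, if_true]
    congr
  | arch w a v b ih1 ih2 =>
    intro p q
    simp only [wM, archF]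
    refine (Finset.sum_congr rfl fun r _ => congrArg (· * _) (ih1 p r)).trans ?_
    simp only [ite_mul, one_mul, zero_mul, act]
    refine (Finset.sum_ite_eq' _ _ _).trans ?_
    rw [if_pos (Finset.mem_univ _)]
    simp only [toW, synA, ite_mul, one_mul, zero_mul]
    refine (Finset.sum_ite_eq' _ _ _).trans ?_
    rw [if_pos (Finset.mem_univ _)]
    refine (Finset.sum_congr rfl fun r _ => congrArg (· * _) (ih2 _ r)).trans ?_
    simp only [ite_mul, one_mul, zero_mul]
    refine (Finset.sum_ite_eq' _ _ _).trans ?_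
    rw [if_pos (Finset.mem_univ _)]
    simp only [Option.some.injEq, exists_eq_left']
    congr

theorem core [Fintype Δ] (A : WNWA K Δ) [IsNoetherian K (A.Q × A.Q → K)]
    (hfin : (Set.range A.behavior).Finite) (T : Set K) :
    NWLangRegular {nw : NestedWord Δ | A.behavior nw ∈ T} := by
  have := cls_finite A hfin
  have := Fintype.ofFinite (Cls A)
  refine ⟨synA A T, fun nw => ?_⟩
  obtain ⟨w, hs, hw⟩ := exists_tree nw
  rw [accepts_iff, behavior_eq _ nw w hs hw, Set.mem_ofPred_eq, behavior_eq A nw w hs hw]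
  simp only [evL, LinearMap.coe_mk, AddHom.coe_mk, Ne, Finset.sum_eq_zero_iff]
  push Not
  simp only [Finset.mem_univ, true_and]
  constructor
  · rintro ⟨p, q, h⟩
    rw [wM_synA] at h
    simp only [ne_eq, mul_eq_zero, not_or] at h
    obtain ⟨⟨h1, h2⟩, h3⟩ := h
    have h1 : p = (cls A .nil, none) := by by_contra hh; exact h1 (if_neg hh)
    have h2 : q = (act A w p.1, p.2) := by by_contra hh; exact h2 (if_neg hh)
    have h3 : ∃ w, q.1 = cls A w ∧ evL A (wM A w) ∈ T := by by_contra hh; exact h3 (if_neg hh)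
    obtain ⟨w', h4, h5⟩ := h3
    rw [h2, h1, act_nil] at h4
    have := Quotient.exact h4
    rwa [← this _ Ctx.base] at h5
  · intro h
    refine ⟨(cls A .nil, none), (cls A w, none), ?_⟩
    rw [wM_synA]
    simp only [ne_eq, mul_eq_zero, not_or]
    refine ⟨⟨?_, ?_⟩, ?_⟩
    · simp [toW, synA]
    · simp [act_nil]
    · have : (synA A T).κ (cls A w, none) := ⟨w, rfl, h⟩
      exact (if_pos this).trans_ne one_ne_zero

/-! ### Reduction to a finitely generated subsemiring -/

/-- Image of an automaton under a semiring homomorphism. -/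
def mapA {R : Type} [CommSemiring R] (φ : R →+* K) (A : WNWA R Δ) : WNWA K Δ where
  Q := A.Q
  ι p := φ (A.ι p)
  κ p := φ (A.κ p)
  δcall p a q := φ (A.δcall p a q)
  δint p a q := φ (A.δint p a q)
  δret p r a q := φ (A.δret p r a q)

theorem mapA_behavior {R : Type} [CommSemiring R] (φ : R →+* K) (A : WNWA R Δ)
    (nw : NestedWord Δ) : (mapA φ A).behavior nw = φ (A.behavior nw) := by
  simp only [WNWA.behavior, map_sum, map_mul, WNWA.runWeight, map_prod]
  refine Finset.sum_congr rfl fun r _ => ?_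
  congr 2
  refine Finset.prod_congr rfl fun j _ => ?_
  simp only [WNWA.posWeight]
  split_ifs <;> rfl

/-- The finite set of weights. -/
def weights (A : WNWA K Δ) : Set K :=
  Set.range A.ι ∪ Set.range A.κ ∪ Set.range (fun x : A.Q × Δ × A.Q => A.δcall x.1 x.2.1 x.2.2) ∪
  Set.range (fun x : A.Q × Δ × A.Q => A.δint x.1 x.2.1 x.2.2) ∪
  Set.range (fun x : A.Q × A.Q × Δ × A.Q => A.δret x.1 x.2.1 x.2.2.1 x.2.2.2)

theorem weights_finite [Fintype Δ] (A : WNWA K Δ) : (weights A).Finite := by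
  unfold weights
  exact ((((Set.finite_range _).union (Set.finite_range _)).union (Set.finite_range _)).union
    (Set.finite_range _)).union (Set.finite_range _)

theorem reduce [Fintype Δ] {R : Type} [CommSemiring R] (φ : R →+* K) (hφ : Function.Injective φ)
    (A : WNWA K Δ) (hw : weights A ⊆ Set.range φ)
    (hN : ∀ ι : Type, Fintype ι → IsNoetherian R (ι → R))
    (hfin : (Set.range A.behavior).Finite) (T : Set K) :
    NWLangRegular {nw : NestedWord Δ | A.behavior nw ∈ T} := by
  have h1 : ∀ p, ∃ x, φ x = A.ι p := fun p => hw (by simp [weights])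
  have h2 : ∀ p, ∃ x, φ x = A.κ p := fun p => hw (by simp [weights])
  have h3 : ∀ p a q, ∃ x, φ x = A.δcall p a q := fun p a q =>
    hw (Or.inl (Or.inl (Or.inr ⟨(p, a, q), rfl⟩)))
  have h4 : ∀ p a q, ∃ x, φ x = A.δint p a q := fun p a q => hw (Or.inl (Or.inr ⟨(p, a, q), rfl⟩))
  have h5 : ∀ p r a q, ∃ x, φ x = A.δret p r a q := fun p r a q => hw (Or.inr ⟨(p, r, a, q), rfl⟩)
  choose ι hι using h1
  choose κ hκ using h2
  choose c hc using h3
  choose i hi using h4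
  choose d hd using h5
  let B : WNWA R Δ := { Q := A.Q, ι := ι, κ := κ, δcall := c, δint := i, δret := d }
  have hB : mapA φ B = A := by
    cases A
    simp only [mapA, B, hι, hκ, hc, hi, hd]
  have hb : ∀ nw, A.behavior nw = φ (B.behavior nw) := by
    intro nw; rw [← mapA_behavior, hB]
  have := hN (B.Q × B.Q) inferInstance
  have hfinB : (Set.range B.behavior).Finite := by
    apply Set.Finite.of_finite_image _ hφ.injOn
    rw [← Set.range_comp]
    convert hfin using 2
    funext nw
    exact (hb nw).symm
  have := core B hfinB (φ ⁻¹' T)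
  simp only [hb]
  exact this

theorem ring_case {K : Type} [CommRing K] [Fintype Δ] (A : WNWA K Δ)
    (hfin : (Set.range A.behavior).Finite) (T : Set K) :
    NWLangRegular {nw : NestedWord Δ | A.behavior nw ∈ T} := by
  have hw := weights_finite A
  have : Algebra.FiniteType ℤ (Algebra.adjoin ℤ (hw.toFinset : Set K)) :=
    (Subalgebra.fg_iff_finiteType _).mp (Subalgebra.fg_adjoin_finset _)
  have hnoeth : IsNoetherianRing (Algebra.adjoin ℤ (hw.toFinset : Set K)) :=
    Algebra.FiniteType.isNoetherianRing ℤ _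
  refine reduce (R := Algebra.adjoin ℤ (hw.toFinset : Set K))
    (Algebra.adjoin ℤ (hw.toFinset : Set K)).val.toRingHom Subtype.val_injective A ?_ ?_ hfin T
  · intro x hx
    exact ⟨⟨x, Algebra.subset_adjoin (by simpa using hx)⟩, rfl⟩
  · intro ι _; infer_instance

theorem lf_case [Fintype Δ] (hK : LocallyFiniteSemiring K) (A : WNWA K Δ)
    (hfin : (Set.range A.behavior).Finite) (T : Set K) :
    NWLangRegular {nw : NestedWord Δ | A.behavior nw ∈ T} := by
  have hw := weights_finite A
  have hfinite := (hK hw.toFinset).to_subtype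
  refine reduce (R := Subsemiring.closure (hw.toFinset : Set K))
    (Subsemiring.closure (hw.toFinset : Set K)).subtype Subtype.val_injective A ?_ ?_ hfin T
  · intro x hx
    exact ⟨⟨x, Subsemiring.subset_closure (by simpa using hx)⟩, rfl⟩
  · intro ι _
    have : Finite (Subsemiring.closure (hw.toFinset : Set K)) := hfinite
    infer_instance

end NWTree

/-- **Corollary (Mathissen).** Let `K` be locally finite or a (commutative) ring,
and let `S` be a regular nested word series with finite image.  Then for every
`A ⊆ K` the language `S⁻¹(A)` is a regular nested word language. -/
theorem preimage_of_regular_series_is_regular_language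
    (K Δ : Type) [CommSemiring K] [Fintype Δ] (h01 : (0 : K) ≠ 1)
    (hK : LocallyFiniteSemiring K ∨ ∀ a : K, ∃ b : K, a + b = 0)
    (S : NestedWord Δ → K) (hreg : NWRegular S)
    (hfin : (Set.range S).Finite) :
    ∀ A : Set K, NWLangRegular {nw : NestedWord Δ | S nw ∈ A} := by
  obtain ⟨A, hA⟩ := hreg
  obtain rfl : A.behavior = S := funext hA
  intro T
  rcases hK with hK | hK
  · exact NWTree.lf_case hK A hfin T
  · choose n hn using hK
    let instN : Neg K := ⟨n⟩
    let inst : CommRing K :=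
      { (inferInstance : CommSemiring K) with
        neg := n
        zsmul := zsmulRec
        neg_add_cancel := fun a => by rw [add_comm]; exact hn a }
    exact NWTree.ring_case A hfin T
end

section
/- Let K be a commutative semiring with 0 ≠ 1 and let R : Δ* → K be an algebraic formal power series. Then there exists a regular nested word series S : NW(Δ) → K such that π(S) = R. -/
/-! ### Algebraic formal power series -/

section Algebraic

variable {K Δ : Type} [CommSemiring K]

open Classical in
/-- Given a family of series `(S_X)` and a word `u ∈ (Δ ∪ 𝒳)*`, the series
`u₁ S_{X₁} u₂ ⋯ u_k S_{X_k} u_{k+1}` obtained by substituting `S_X` for each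
variable `X` in `u` and taking Cauchy products. -/
noncomputable def wordSeries {X : Type} (S : X → List Δ → K) :
    List (Δ ⊕ X) → List Δ → K
  | [] => fun w => if w = [] then 1 else 0
  | (Sum.inl a) :: rest => fun w =>
      match w with
      | [] => 0
      | b :: w' => if b = a then wordSeries S rest w' else 0
  | (Sum.inr x) :: rest => fun w =>
      ∑ k ∈ Finset.range (w.length + 1),
        S x (w.take k) * wordSeries S rest (w.drop k)

/-- `(S_X)` is a solution of the algebraic system `(P_X)`. -/
def IsSolution {X : Type} (P : X → List (Δ ⊕ X) → K) (S : X → List Δ → K) : Prop :=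
  ∀ x w, S x w = ∑ᶠ u : List (Δ ⊕ X), P x u * wordSeries S u w

/-- A proper algebraic system: `(P_X, Y) = (P_X, ε) = 0` for all variables `X, Y`. -/
def IsProper {X : Type} (P : X → List (Δ ⊕ X) → K) : Prop :=
  ∀ x, P x [] = 0 ∧ ∀ y : X, P x [Sum.inr y] = 0

/-- `S : Δ* → K` is an algebraic formal power series: a component of the
(unique) quasiregular solution of a proper algebraic system with finitely
supported polynomials. -/
def IsAlgebraicSeries (K Δ : Type) [CommSemiring K] (S : List Δ → K) : Prop :=
  ∃ (X : Type) (_ : Fintype X) (P : X → List (Δ ⊕ X) → K) (Sol : X → List Δ → K),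
    (∀ x, (Function.support (P x)).Finite) ∧
    IsProper P ∧ IsSolution P Sol ∧ (∀ x, Sol x [] = 0) ∧
    ∃ x₀, ∀ w, S w = Sol x₀ w

end Algebraic
/-- The projection `π(S) : Δ* → K` of a nested word series: `(π(S), w)` is the
sum of `(S, (w,ν))` over all nesting relations `ν` of width `|w|`. -/
noncomputable def projNW {K Δ : Type} [CommSemiring K]
    (S : NestedWord Δ → K) : List Δ → K :=
  fun w => ∑ᶠ (nw : NestedWord Δ) (_ : nw.word = w), S nw

/-! ### The semiring of noncommutative formal power series -/

/-- Formal power series over `Δ` with coefficients in `K`. -/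
def Ser (K Δ : Type) : Type := List Δ → K

namespace Ser

variable {K Δ : Type} [CommSemiring K]

instance : AddCommMonoid (Ser K Δ) := inferInstanceAs (AddCommMonoid (List Δ → K))
instance : Module K (Ser K Δ) := inferInstanceAs (Module K (List Δ → K))

@[ext] theorem ext {f g : Ser K Δ} (h : ∀ w, f w = g w) : f = g := funext h

@[simp] theorem zero_apply (w : List Δ) : (0 : Ser K Δ) w = 0 := rfl
@[simp] theorem add_apply (f g : Ser K Δ) (w : List Δ) : (f + g) w = f w + g w := rfl
@[simp] theorem smul_apply (c : K) (f : Ser K Δ) (w : List Δ) : (c • f) w = c * f w := rfl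

/-- Evaluation as an additive homomorphism. -/
def evalHom (w : List Δ) : Ser K Δ →+ K where
  toFun f := f w
  map_zero' := rfl
  map_add' _ _ := rfl

@[simp] theorem sum_apply {ι : Type*} (s : Finset ι) (f : ι → Ser K Δ) (w : List Δ) :
    (∑ i ∈ s, f i) w = ∑ i ∈ s, f i w := map_sum (evalHom w) f s

instance : Mul (Ser K Δ) :=
  ⟨fun f g w => ∑ k ∈ Finset.range (w.length + 1), f (w.take k) * g (w.drop k)⟩

open Classical in
noncomputable instance : One (Ser K Δ) := ⟨fun w => if w = [] then 1 else 0⟩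

theorem mul_apply (f g : Ser K Δ) (w : List Δ) :
    (f * g) w = ∑ k ∈ Finset.range (w.length + 1), f (w.take k) * g (w.drop k) := rfl

@[simp] theorem one_nil : (1 : Ser K Δ) [] = 1 := by
  show (if _ then _ else _) = _
  simp

@[simp] theorem one_cons (a : Δ) (w : List Δ) : (1 : Ser K Δ) (a :: w) = 0 := by
  show (if _ then _ else _) = _
  simp

@[simp] theorem mul_nil (f g : Ser K Δ) : (f * g) [] = f [] * g [] := by
  simp [mul_apply]

/-- Left derivative. -/
def d (a : Δ) : Ser K Δ →ₗ[K] Ser K Δ where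
  toFun f := fun w => f (a :: w)
  map_add' _ _ := rfl
  map_smul' _ _ := rfl

@[simp] theorem d_apply (a : Δ) (f : Ser K Δ) (w : List Δ) : d a f w = f (a :: w) := rfl

theorem mul_cons (f g : Ser K Δ) (a : Δ) (w : List Δ) :
    (f * g) (a :: w) = f [] * g (a :: w) + (d a f * g) w := by
  rw [mul_apply, List.length_cons, Finset.sum_range_succ', add_comm]
  simp [mul_apply]

theorem ext_d {f g : Ser K Δ} (h0 : f [] = g []) (h : ∀ a, d a f = d a g) : f = g := by
  ext w
  cases w with
  | nil => exact h0
  | cons a w => exact congrFun (h a) w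

theorem add_mul' (f g h : Ser K Δ) : (f + g) * h = f * h + g * h := by
  ext w; simp [mul_apply, add_mul, Finset.sum_add_distrib]

theorem mul_add' (f g h : Ser K Δ) : f * (g + h) = f * g + f * h := by
  ext w; simp [mul_apply, mul_add, Finset.sum_add_distrib]

theorem smul_mul' (c : K) (f g : Ser K Δ) : (c • f) * g = c • (f * g) := by
  ext w; simp [mul_apply, mul_assoc, Finset.mul_sum]

theorem mul_smul' (c : K) (f g : Ser K Δ) : f * (c • g) = c • (f * g) := by
  ext w; simp [mul_apply, mul_left_comm, Finset.mul_sum]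

theorem d_mul (a : Δ) (f g : Ser K Δ) : d a (f * g) = f [] • d a g + d a f * g := by
  ext w; simp [mul_cons]

theorem mul_assoc_aux (w : List Δ) : ∀ f g h : Ser K Δ, (f * g * h) w = (f * (g * h)) w := by
  induction w with
  | nil => intro f g h; simp [mul_assoc]
  | cons a w ih =>
    intro f g h
    rw [mul_cons, mul_cons, d_mul, add_mul', add_apply, smul_mul', smul_apply, ih, mul_cons,
      mul_nil]
    ring

theorem d_one (a : Δ) : d a (1 : Ser K Δ) = 0 := by ext w; simp

theorem one_mul_aux (f : Ser K Δ) : 1 * f = f := by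
  ext w
  cases w with
  | nil => simp
  | cons a w => rw [mul_cons, d_one]; simp [mul_apply]

theorem mul_one_aux (w : List Δ) : ∀ f : Ser K Δ, (f * 1) w = f w := by
  induction w with
  | nil => simp
  | cons a w ih => intro f; rw [mul_cons, ih]; simp

noncomputable instance : Semiring (Ser K Δ) where
  left_distrib := mul_add'
  right_distrib := add_mul'
  zero_mul f := by ext w; simp [mul_apply]
  mul_zero f := by ext w; simp [mul_apply]
  mul_assoc f g h := by ext w; exact mul_assoc_aux w f g h
  one_mul := one_mul_aux
  mul_one f := by ext w; exact mul_one_aux w f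

noncomputable instance : Algebra K (Ser K Δ) :=
  Algebra.ofModule (fun c f g => smul_mul' c f g) (fun c f g => mul_smul' c f g)

open Classical in
/-- The series consisting of a single letter. -/
noncomputable def letter (b : Δ) : Ser K Δ := fun w => if w = [b] then 1 else 0

@[simp] theorem letter_nil (b : Δ) : (letter b : Ser K Δ) [] = 0 := by simp [letter]

open Classical in
theorem d_letter (a b : Δ) : d a (letter b : Ser K Δ) = if a = b then 1 else 0 := by
  ext w
  by_cases h : a = b
  · cases w <;> simp [letter, h]
  · simp [letter, h]

/-- Value of a symbol. -/
noncomputable def sym {X : Type} (S : X → Ser K Δ) : Δ ⊕ X → Ser K Δ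
  | Sum.inl b => letter b
  | Sum.inr x => S x

/-- Value of a word over letters and variables. -/
noncomputable def wval {X : Type} (S : X → Ser K Δ) (u : List (Δ ⊕ X)) : Ser K Δ :=
  (u.map (sym S)).prod

theorem wordSeries_eq {X : Type} (S : X → Ser K Δ) (u : List (Δ ⊕ X)) :
    ∀ w, wordSeries S u w = wval S u w := by
  induction u with
  | nil => intro w; cases w <;> simp [wordSeries, wval]
  | cons c u ih =>
    intro w
    have hc : wval S (c :: u) = sym S c * wval S u := by simp [wval]
    rw [hc]
    cases c with
    | inl b =>
      cases w with
      | nil => simp [wordSeries, sym]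
      | cons a w =>
        rw [mul_cons]
        simp only [sym, d_letter, wordSeries, letter_nil, ih]
        by_cases h : a = b <;> simp [h]
    | inr x => simp only [wordSeries, sym, mul_apply, ih]

/-! Star of a quasiregular matrix -/

open Classical in
/-- The matrix `T = 1 + T M`. -/
noncomputable def star {X : Type} [Fintype X] (M : X → X → Ser K Δ) : List Δ → X → X → K
  | [] => fun y x => if y = x then 1 else 0
  | a :: w => fun y x => ∑ k : Fin (w.length + 1), ∑ z,
      star M ((a :: w).take k) y z * M z x ((a :: w).drop k)
termination_by w => w.length
decreasing_by
  have := k.2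
  simp only [List.length_take, List.length_cons]; omega

/-- The star matrix as a matrix of series. -/
noncomputable def T {X : Type} [Fintype X] (M : X → X → Ser K Δ) (y x : X) : Ser K Δ :=
  fun w => star M w y x

open Classical in
theorem T_eq {X : Type} [Fintype X] (M : X → X → Ser K Δ) (hM : ∀ y x, M y x [] = 0) (y x : X) :
    T M y x = (if y = x then 1 else 0) + ∑ z, T M y z * M z x := by
  ext w
  cases w with
  | nil =>
    have : ∀ z, (T M y z * M z x) [] = 0 := by intro z; simp [hM]
    simp only [add_apply, sum_apply, this, T, star]
    by_cases h : y = x <;> simp [h]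
  | cons a w =>
    have h1 : ((if y = x then 1 else 0 : Ser K Δ)) (a :: w) = 0 := by
      by_cases h : y = x <;> simp [h]
    rw [add_apply, h1, zero_add, sum_apply]
    conv_lhs => unfold T star
    rw [Finset.sum_comm]
    refine Finset.sum_congr rfl fun z _ => ?_
    rw [mul_apply, Finset.sum_range_succ, Finset.sum_range]
    simp [hM, T]

/-- Uniqueness for right linear systems. -/
theorem lin_unique {X : Type} [Fintype X] (M : X → X → Ser K Δ) (hM : ∀ y x, M y x [] = 0)
    (C D D' : X → Ser K Δ) (h : ∀ x, D x = C x + ∑ y, D y * M y x)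
    (h' : ∀ x, D' x = C x + ∑ y, D' y * M y x) : D = D' := by
  have key : ∀ n, ∀ w : List Δ, w.length = n → ∀ x, D x w = D' x w := by
    intro n
    induction n using Nat.strong_induction_on with
    | _ n ih =>
      intro w hw x
      rw [h x, h' x]
      simp only [add_apply, sum_apply]
      congr 1
      refine Finset.sum_congr rfl fun y _ => ?_
      rw [mul_apply, mul_apply, Finset.sum_range_succ, Finset.sum_range_succ]
      simp only [List.drop_length, hM, mul_zero, add_zero]
      refine Finset.sum_congr rfl fun k hk => ?_
      rw [Finset.mem_range] at hk
      rw [ih k (by omega) (w.take k) (by simp; omega)]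
  funext x
  ext w
  exact key _ w rfl x

theorem lin_solve {X : Type} [Fintype X] (M : X → X → Ser K Δ) (hM : ∀ y x, M y x [] = 0)
    (C D : X → Ser K Δ) (h : ∀ x, D x = C x + ∑ y, D y * M y x) (x : X) :
    D x = ∑ y, C y * T M y x := by
  classical
  have := lin_unique M hM C D (fun x => ∑ y, C y * T M y x) h ?_
  · rw [this]
  · intro x
    have : ∀ y, C y * T M y x
        = (if y = x then C y else 0) + ∑ z, C y * T M y z * M z x := by
      intro y
      rw [T_eq M hM y x, mul_add, Finset.mul_sum]
      simp [mul_assoc]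
    simp only [this, Finset.sum_add_distrib, Finset.sum_mul]
    rw [Finset.sum_comm]
    simp

end Ser

/-! ### A Greibach type decomposition -/

namespace Ser

variable {K Δ : Type} [CommSemiring K]

theorem wval_cons {X : Type} (S : X → Ser K Δ) (c : Δ ⊕ X) (u : List (Δ ⊕ X)) :
    wval S (c :: u) = sym S c * wval S u := by simp [wval]

theorem sym_nil {X : Type} (S : X → Ser K Δ) (hS : ∀ x, S x [] = 0) (c : Δ ⊕ X) :
    sym S c [] = 0 := by
  cases c <;> simp [sym, hS]

theorem d_qr_mul (a : Δ) (f g : Ser K Δ) (hf : f [] = 0) : d a (f * g) = d a f * g := by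
  rw [d_mul, hf]; simp

/-- The left spine matrix of the system. -/
noncomputable def spine {X : Type} (P : X → List (Δ ⊕ X) → K)
    (hfin : ∀ x, (Function.support (P x)).Finite) (S : X → Ser K Δ) (y x : X) : Ser K Δ :=
  open Classical in
  ∑ u ∈ (hfin x).toFinset, if u.head? = some (Sum.inr y) then P x u • wval S u.tail else 0

/-- The terminal part of the derivative of the system. -/
noncomputable def corner {X : Type} (P : X → List (Δ ⊕ X) → K)
    (hfin : ∀ x, (Function.support (P x)).Finite) (S : X → Ser K Δ) (a : Δ) (x : X) : Ser K Δ :=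
  open Classical in
  ∑ u ∈ (hfin x).toFinset, if u.head? = some (Sum.inl a) then P x u • wval S u.tail else 0

theorem spine_nil {X : Type} (P : X → List (Δ ⊕ X) → K)
    (hfin : ∀ x, (Function.support (P x)).Finite) (hP : IsProper P) (S : X → Ser K Δ)
    (hS : ∀ x, S x [] = 0) (y x : X) : spine P hfin S y x [] = 0 := by
  classical
  rw [spine, sum_apply]
  refine Finset.sum_eq_zero fun u hu => ?_
  split_ifs with h
  · match u, h with
    | c :: β, h =>
      simp only [List.head?_cons, Option.some.injEq] at h
      subst h
      match β with
      | [] => rw [(hP x).2 y]; simp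
      | c' :: β => simp [wval_cons, sym_nil S hS]
  · rfl

theorem d_sol {X : Type} [Fintype X] (P : X → List (Δ ⊕ X) → K)
    (hfin : ∀ x, (Function.support (P x)).Finite) (hP : IsProper P) (S : X → Ser K Δ)
    (hS : ∀ x, S x [] = 0)
    (hsol : ∀ x, S x = ∑ u ∈ (hfin x).toFinset, P x u • wval S u) (a : Δ) (x : X) :
    d a (S x) = ∑ y, corner P hfin S a y * T (spine P hfin S) y x := by
  classical
  refine lin_solve (spine P hfin S) (spine_nil P hfin hP S hS) (corner P hfin S a)
    (fun x => d a (S x)) ?_ x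
  intro x
  show d a (S x) = _
  conv_lhs => rw [hsol x]
  simp only [spine, corner, map_sum, map_smul, Finset.mul_sum]
  rw [Finset.sum_comm, ← Finset.sum_add_distrib]
  refine Finset.sum_congr rfl fun u hu => ?_
  match u with
  | [] => simp [(hP x).1]
  | Sum.inl b :: α =>
    rw [wval_cons, d_qr_mul _ _ _ (sym_nil S hS _)]
    simp only [sym, d_letter]
    by_cases h : a = b
    · subst h; simp
    · simp [h, Ne.symm h]
  | Sum.inr y :: β =>
    rw [wval_cons, d_qr_mul _ _ _ (sym_nil S hS _)]
    simp [sym, mul_ite]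

theorem d_T {X : Type} [Fintype X] (M : X → X → Ser K Δ) (hM : ∀ y x, M y x [] = 0) (a : Δ)
    (y x : X) : d a (T M y x) = ∑ v, d a (M y v) * T M v x := by
  classical
  refine lin_solve M hM (fun x => d a (M y x)) (fun x => d a (T M y x)) ?_ x
  intro x
  show d a (T M y x) = _
  conv_lhs => rw [T_eq M hM y x]
  have h1 : d a (if y = x then 1 else 0 : Ser K Δ) = 0 := by
    split_ifs <;> simp [d_one]
  have h2 : ∀ v, T M y v [] = if y = v then 1 else 0 := by
    intro v; simp [T, star]
  simp only [map_add, map_sum, h1, d_mul, h2, Finset.sum_add_distrib]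
  simp

open scoped Pointwise in
/-- The Greibach type normal form: the solution lies in a finite set of series each
of which is `1` or a product of a quasiregular series, whose derivatives are combinations of
elements of the set, with an element of the set. -/
theorem greibach {X : Type} [Fintype X] (P : X → List (Δ ⊕ X) → K)
    (hfin : ∀ x, (Function.support (P x)).Finite) (hP : IsProper P) (S : X → Ser K Δ)
    (hS : ∀ x, S x [] = 0)
    (hsol : ∀ x, S x = ∑ u ∈ (hfin x).toFinset, P x u • wval S u) :
    ∃ F : Set (Ser K Δ), F.Finite ∧ (1 : Ser K Δ) ∈ F ∧ (∀ x, S x ∈ F) ∧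
      ∀ f ∈ F, f = 1 ∨ ∃ n g : Ser K Δ, g ∈ F ∧ n [] = 0 ∧
        (∀ a, d a n ∈ Submodule.span K F) ∧ f = n * g := by
  classical
  set M := spine P hfin S with hMdef
  have hM := spine_nil P hfin hP S hS
  rw [← hMdef] at hM
  let Z : X × X → Ser K Δ := fun p => ∑ v, T M p.1 v * M v p.2
  have hTZ : ∀ y x, T M y x = (if y = x then 1 else 0) + Z (y, x) := fun y x => T_eq M hM y x
  have hZ0 : ∀ p, Z p [] = 0 := by
    intro p; simp [Z, hM]
  let U0 : Set (List (Δ ⊕ X)) :=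
    {[]} ∪ Set.range (fun x : X => [Sum.inr x]) ∪ ⋃ x, Function.support (P x)
  have hU0 : U0.Finite :=
    ((Set.finite_singleton _).union (Set.finite_range _)).union (Set.finite_iUnion hfin)
  let W : Set (List (Δ ⊕ X)) := ⋃ u ∈ U0, {v | v <:+ u}
  have hWfin : W.Finite := by
    refine hU0.biUnion fun u _ => ?_
    refine (u.tails.toFinset.finite_toSet).subset ?_
    intro v hv
    simpa using hv
  have hWmem : ∀ v u, u ∈ U0 → v <:+ u → v ∈ W := fun v u hu hv =>
    Set.mem_biUnion hu hv
  have hWnil : [] ∈ W := hWmem [] [] (by simp [U0]) (by simp)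
  have hWx : ∀ x, [Sum.inr x] ∈ W := fun x => hWmem _ [Sum.inr x] (by simp [U0]) (by simp)
  have hWP : ∀ x u, u ∈ (hfin x).toFinset → u ∈ W := fun x u hu => by
    refine hWmem _ u ?_ (by simp)
    right
    rw [Set.mem_iUnion]
    exact ⟨x, by simpa using hu⟩
  have hWtail : ∀ c v, c :: v ∈ W → v ∈ W := by
    intro c v h
    obtain ⟨u, hu, hv⟩ := Set.mem_iUnion₂.1 h
    exact hWmem _ u hu ((List.suffix_cons c v).trans hv)
  have hWtail' : ∀ v, v ∈ W → v.tail ∈ W := by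
    intro v h
    cases v with
    | nil => exact h
    | cons c v => exact hWtail c v h
  let A : Set (Ser K Δ) := wval S '' W
  let B : Set (Ser K Δ) := insert 1 (Set.range Z)
  have hAfin : A.Finite := hWfin.image _
  have hBfin : B.Finite := (Set.finite_range _).insert 1
  have h1A : (1 : Ser K Δ) ∈ A := ⟨[], hWnil, by simp [wval]⟩
  have h1B : (1 : Ser K Δ) ∈ B := Set.mem_insert _ _
  have hspan : Submodule.span K (A * B * A * B)
      = Submodule.span K A * Submodule.span K B * Submodule.span K A * Submodule.span K B := by
    simp only [Submodule.span_mul_span]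
  set s := Submodule.span K A with hs
  set z := Submodule.span K B with hz
  have h1s : (1 : Ser K Δ) ∈ s := Submodule.subset_span h1A
  have h1z : (1 : Ser K Δ) ∈ z := Submodule.subset_span h1B
  have hAs : ∀ v ∈ W, wval S v ∈ s := fun v hv => Submodule.subset_span ⟨v, hv, rfl⟩
  have hTz : ∀ y x, T M y x ∈ z := by
    intro y x
    rw [hTZ]
    refine z.add_mem ?_ (Submodule.subset_span (Set.mem_insert_of_mem _ ⟨_, rfl⟩))
    split_ifs
    · exact h1z
    · exact z.zero_mem
  have hcorner : ∀ a x, corner P hfin S a x ∈ s := by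
    intro a x
    refine s.sum_mem fun u hu => ?_
    split_ifs
    · exact s.smul_mem _ (hAs _ (hWtail' _ (hWP x u hu)))
    · exact s.zero_mem
  have hdS : ∀ a x, d a (S x) ∈ s * z := by
    intro a x
    rw [d_sol P hfin hP S hS hsol]
    exact Submodule.sum_mem _ fun y _ => Submodule.mul_mem_mul (hcorner a y) (hTz y x)
  have hdsym : ∀ a c, d a (sym S c) ∈ s * z := by
    intro a c
    cases c with
    | inl b =>
      simp only [sym, d_letter]
      split_ifs
      · simpa using Submodule.mul_mem_mul h1s h1z
      · exact Submodule.zero_mem _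
    | inr x => exact hdS a x
  have hdw : ∀ a, ∀ v ∈ W, d a (wval S v) ∈ s * z * s := by
    intro a v hv
    cases v with
    | nil => simp [wval, d_one]
    | cons c v =>
      rw [wval_cons, d_qr_mul _ _ _ (sym_nil S hS _)]
      exact Submodule.mul_mem_mul (hdsym a c) (hAs _ (hWtail c v hv))
  have hdM : ∀ a y x, d a (M y x) ∈ s * z * s := by
    intro a y x
    rw [hMdef, spine, map_sum]
    refine Submodule.sum_mem _ fun u hu => ?_
    split_ifs
    · rw [map_smul]
      exact Submodule.smul_mem _ _ (hdw a _ (hWtail' _ (hWP x u hu)))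
    · simp
  have hdZ : ∀ a p, d a (Z p) ∈ s * z * s * z := by
    intro a p
    have h2 : d a (Z p) = d a (T M p.1 p.2) := by
      rw [hTZ]
      split_ifs <;> simp [d_one]
    rw [h2, d_T M hM]
    exact Submodule.sum_mem _ fun v _ => Submodule.mul_mem_mul (hdM a _ v) (hTz v _)
  have hdsym' : ∀ a c, d a (sym S c) ∈ s * z * s * z := by
    intro a c
    simpa using Submodule.mul_mem_mul (Submodule.mul_mem_mul (hdsym a c) h1s) h1z
  have hmem : ∀ p q r t, p ∈ A → q ∈ B → r ∈ A → t ∈ B → p * q * r * t ∈ A * B * A * B :=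
    fun p q r t hp hq hr ht =>
      Set.mul_mem_mul (Set.mul_mem_mul (Set.mul_mem_mul hp hq) hr) ht
  refine ⟨A * B * A * B, ((hAfin.mul hBfin).mul hAfin).mul hBfin, ?_, ?_, ?_⟩
  · simpa using hmem 1 1 1 1 h1A h1B h1A h1B
  · intro x
    have := hmem (wval S [Sum.inr x]) 1 1 1 ⟨_, hWx x, rfl⟩ h1B h1A h1B
    simpa [wval, sym] using this
  · rw [hspan]
    -- factor out the first nontrivial factor
    have hBA : ∀ q ∈ B, ∀ r ∈ A, ∀ t ∈ B, q * r * t = 1 ∨ ∃ n g : Ser K Δ,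
        g ∈ A * B * A * B ∧ n [] = 0 ∧ (∀ a, d a n ∈ s * z * s * z) ∧ q * r * t = n * g := by
      intro q hq r hr t ht
      rcases hq with rfl | ⟨p, rfl⟩
      · obtain ⟨v, hv, rfl⟩ := hr
        cases v with
        | nil =>
          rcases ht with rfl | ⟨p, rfl⟩
          · left; simp [wval]
          · right
            refine ⟨Z p, 1, ?_, hZ0 p, fun a => hdZ a p, by simp [wval]⟩
            simpa using hmem 1 1 1 1 h1A h1B h1A h1B
        | cons c v =>
          right
          refine ⟨sym S c, wval S v * t, ?_, sym_nil S hS c, fun a => hdsym' a c, ?_⟩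
          · simpa using hmem 1 1 _ t h1A h1B ⟨v, hWtail c v hv, rfl⟩ ht
          · rw [wval_cons]; simp [mul_assoc]
      · right
        refine ⟨Z p, r * t, ?_, hZ0 p, fun a => hdZ a p, by simp [mul_assoc]⟩
        simpa using hmem 1 1 r t h1A h1B hr ht
    intro f hf
    obtain ⟨_, ⟨_, ⟨p, hp, q, hq, rfl⟩, r, hr, rfl⟩, t, ht, rfl⟩ := hf
    obtain ⟨v, hv, rfl⟩ := hp
    cases v with
    | nil => simpa [wval] using hBA q hq r hr t ht
    | cons c v =>
      right
      refine ⟨sym S c, wval S v * q * r * t, ?_, sym_nil S hS c, fun a => hdsym' a c, ?_⟩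
      · exact hmem _ _ _ _ ⟨v, hWtail c v hv, rfl⟩ hq hr ht
      · simp only [wval_cons, mul_assoc]

/-- Quadratic form of the decomposition. -/
theorem quadratic {F : Set (Ser K Δ)} (hF : F.Finite)
    (h : ∀ f ∈ F, f = 1 ∨ ∃ n g : Ser K Δ, g ∈ F ∧ n [] = 0 ∧
        (∀ a, d a n ∈ Submodule.span K F) ∧ f = n * g) :
    ∃ _ : Fintype F, ∃ (A : Δ → F → F → K) (B : Δ → F → F → F → K),
      (∀ a i j k, B a i j k ≠ 0 → j.1 [] = 0 ∧ k.1 [] = 0) ∧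
      ∀ a (i : F), d a i.1 = ∑ j : F, A a i j • j.1 + ∑ k : F, ∑ j : F, B a i j k • (j.1 * k.1) := by
  classical
  refine ⟨hF.fintype, ?_⟩
  let _ := hF.fintype
  have hqr : ∀ f ∈ F, f = 1 ∨ f [] = 0 := by
    intro f hf
    rcases h f hf with h | ⟨n, g, -, hn, -, rfl⟩
    · exact Or.inl h
    · right; simp [hn]
  let E : F ⊕ F × F → Ser K Δ := fun t => match t with
    | Sum.inl j => j.1
    | Sum.inr (j, k) => if j.1 [] = 0 ∧ k.1 [] = 0 then j.1 * k.1 else 0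
  have hE : ∀ a (i : F), d a i.1 ∈ Submodule.span K (Set.range E) := by
    intro a i
    have hEl : ∀ f ∈ F, f ∈ Submodule.span K (Set.range E) := fun f hf =>
      Submodule.subset_span ⟨Sum.inl ⟨f, hf⟩, rfl⟩
    rcases h i.1 i.2 with h' | ⟨n, g, hg, hn, hd, h'⟩
    · rw [h', d_one]; exact Submodule.zero_mem _
    · rw [h', d_qr_mul _ _ _ hn]
      refine Submodule.span_induction (p := fun x _ => x * g ∈ Submodule.span K (Set.range E))
        ?_ ?_ ?_ ?_ (hd a)
      · intro f hf
        rcases hqr f hf with rfl | hf0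
        · rw [one_mul]; exact hEl g hg
        rcases hqr g hg with rfl | hg0
        · rw [mul_one]; exact hEl f hf
        · refine Submodule.subset_span ⟨Sum.inr (⟨f, hf⟩, ⟨g, hg⟩), ?_⟩
          simp [E, hf0, hg0]
      · simp
      · intro x y _ _ hx hy
        rw [add_mul]; exact Submodule.add_mem _ hx hy
      · intro c x _ hx
        rw [smul_mul_assoc]; exact Submodule.smul_mem _ _ hx
  simp only [Submodule.mem_span_range_iff_exists_fun] at hE
  choose c hc using hE
  refine ⟨fun a i j => c a i (Sum.inl j),
    fun a i j k => if j.1 [] = 0 ∧ k.1 [] = 0 then c a i (Sum.inr (j, k)) else 0, ?_, ?_⟩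
  · intro a i j k hne
    by_contra hcon
    simp [hcon] at hne
  · intro a i
    rw [← hc a i, Fintype.sum_sum_type, Fintype.sum_prod_type, Finset.sum_comm]
    congr 1
    refine Finset.sum_congr rfl fun k _ => Finset.sum_congr rfl fun j _ => ?_
    by_cases hjk : j.1 [] = 0 ∧ k.1 [] = 0 <;> simp [E, hjk]

end Ser

/-! ### Stack semantics of weighted nested word automata -/

/-- Position types: call, internal, return. -/
inductive Ty : Type
  | c
  | i
  | r

noncomputable instance : DecidableEq Ty := Classical.decEq Ty

/-- All type sequences of a given length. -/
noncomputable def tyLists : ℕ → Finset (List Ty)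
  | 0 => {[]}
  | n + 1 => (tyLists n).image (List.cons Ty.c) ∪ ((tyLists n).image (List.cons Ty.i)
      ∪ (tyLists n).image (List.cons Ty.r))

theorem mem_tyLists (n : ℕ) : ∀ t : List Ty, t ∈ tyLists n ↔ t.length = n := by
  induction n with
  | zero => intro t; simp [tyLists]
  | succ n ih =>
    intro t
    cases t with
    | nil => simp [tyLists]
    | cons x t => cases x <;> simp [tyLists, ih]

theorem sum_tyLists {K : Type} [AddCommMonoid K] (n : ℕ) (f : List Ty → K) :
    ∑ t ∈ tyLists (n + 1), f t = ∑ t ∈ tyLists n, f (Ty.c :: t)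
      + (∑ t ∈ tyLists n, f (Ty.i :: t) + ∑ t ∈ tyLists n, f (Ty.r :: t)) := by
  rw [tyLists, Finset.sum_union, Finset.sum_union]
  · rw [Finset.sum_image, Finset.sum_image, Finset.sum_image] <;>
      intro x _ y _ h <;> exact List.tail_eq_of_cons_eq h
  · rw [Finset.disjoint_left]; intro x; simp +contextual
    rintro y - rfl z -; simp
  · rw [Finset.disjoint_left]; intro x; simp +contextual
    rintro y - rfl; simp

namespace WNWA

variable {K Δ : Type} [CommSemiring K]

/-- Weight of reading a word with given position types, stack, and state. -/
def U (A : WNWA K Δ) : List Ty → List Δ → List A.Q → A.Q → K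
  | [], [], [], p => A.κ p
  | Ty.i :: t, a :: w, σ, p => ∑ r, A.δint p a r * U A t w σ r
  | Ty.c :: t, a :: w, σ, p => ∑ r, A.δcall p a r * U A t w (p :: σ) r
  | Ty.r :: t, a :: w, p' :: σ, p => ∑ r, A.δret p p' a r * U A t w σ r
  | _, _, _, _ => 0

/-- Total weight. -/
noncomputable def Utot (A : WNWA K Δ) (w : List Δ) (σ : List A.Q) (p : A.Q) : K :=
  ∑ t ∈ tyLists w.length, A.U t w σ p

theorem Utot_cons (A : WNWA K Δ) (a : Δ) (w : List Δ) (σ : List A.Q) (p : A.Q) :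
    A.Utot (a :: w) σ p = ∑ r, A.δcall p a r * A.Utot w (p :: σ) r
      + (∑ r, A.δint p a r * A.Utot w σ r +
        ∑ t ∈ tyLists w.length, A.U (Ty.r :: t) (a :: w) σ p) := by
  rw [Utot, List.length_cons, sum_tyLists]
  simp only [U, Utot, Finset.mul_sum]
  congr 1
  · rw [Finset.sum_comm]
  congr 1
  · rw [Finset.sum_comm]

theorem Utot_ret (A : WNWA K Δ) (a : Δ) (w : List Δ) (σ : List A.Q) (p p' : A.Q) :
    ∑ t ∈ tyLists w.length, A.U (Ty.r :: t) (a :: w) (p' :: σ) p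
      = ∑ r, A.δret p p' a r * A.Utot w σ r := by
  simp only [U, Utot, Finset.mul_sum]
  rw [Finset.sum_comm]

theorem Utot_ret_nil (A : WNWA K Δ) (a : Δ) (w : List Δ) (p : A.Q) :
    ∑ t ∈ tyLists w.length, A.U (Ty.r :: t) (a :: w) [] p = 0 := by
  simp [U]

end WNWA

namespace Ser

variable {K Δ : Type} [CommSemiring K]

open Classical in
/-- The quasiregular part. -/
noncomputable def qr (f : Ser K Δ) : Ser K Δ := fun w => if w = [] then 0 else f w

@[simp] theorem qr_nil (f : Ser K Δ) : qr f [] = 0 := by simp [qr]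

@[simp] theorem d_qr (a : Δ) (f : Ser K Δ) : d a (qr f) = d a f := by ext w; simp [qr]

theorem eq_add_qr (f : Ser K Δ) : f = f [] • (1 : Ser K Δ) + qr f := by
  ext w
  cases w <;> simp [qr]

theorem sum_eq_qr {Q : Type} [Fintype Q] (c : Q → K) (V : Q → Ser K Δ) :
    ∑ j, c j • V j = (∑ j, c j * V j []) • (1 : Ser K Δ) + ∑ j, c j • qr (V j) := by
  rw [Finset.sum_smul, ← Finset.sum_add_distrib]
  refine Finset.sum_congr rfl fun j _ => ?_
  conv_lhs => rw [eq_add_qr (V j), smul_add, smul_smul]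

theorem Utot_sem (A : WNWA K Δ) (V : A.Q → Ser K Δ) (tt : A.Q → A.Q → K)
    (hκ : ∀ p, A.κ p = V p [])
    (hW : ∀ p, ∑ k, tt p k * V k [] = 0)
    (hC : ∀ a p, ∑ j, A.δcall p a j * V j [] = 0)
    (hd : ∀ a p, d a (V p) = ∑ j, A.δint p a j • V j
      + (∑ j, A.δcall p a j • V j) * ∑ k, tt p k • V k)
    (hret : ∀ s p b t, A.δret s p b t = V s [b] * tt p t) (w : List Δ) :
    (∀ p, A.Utot w [] p = V p w) ∧
    ∀ p p' σ, A.Utot w (p' :: σ) p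
      = (qr (V p) * ((p' :: σ).map fun p => ∑ k, tt p k • V k).prod) w := by
  have hW' : ∀ p, ∑ k, tt p k • V k = ∑ k, tt p k • qr (V k) := by
    intro p; rw [sum_eq_qr, hW]; simp
  have hC' : ∀ a p, ∑ k, A.δcall p a k • V k = ∑ k, A.δcall p a k • qr (V k) := by
    intro a p; rw [sum_eq_qr, hC]; simp
  have hI : ∀ a p, ∑ j, A.δint p a j * V j [] = V p [a] := by
    intro a p
    have := congrFun (hd a p) []
    have h2 : (∑ j, A.δcall p a j • V j : Ser K Δ) [] = 0 := by
      rw [sum_apply]; exact hC a p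
    rw [add_apply, mul_nil, h2, zero_mul, add_zero, sum_apply] at this
    exact this.symm
  induction w with
  | nil =>
    constructor
    · intro p; simp [WNWA.Utot, tyLists, WNWA.U, hκ]
    · intro p p' σ; simp [WNWA.Utot, tyLists, WNWA.U]
  | cons a w ih =>
    obtain ⟨ih1, ih2⟩ := ih
    constructor
    · intro p
      rw [WNWA.Utot_cons, WNWA.Utot_ret_nil, add_zero]
      have := congrFun (hd a p) w
      rw [d_apply] at this
      rw [this, hC', add_comm]
      simp only [ih1, ih2, add_apply, Finset.sum_mul, sum_apply, smul_mul_assoc, smul_apply]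
      simp
    · intro p p' σ
      rw [WNWA.Utot_cons, WNWA.Utot_ret, mul_cons, qr_nil, zero_mul, zero_add, d_qr, hd,
        sum_eq_qr, hI, hC']
      have h3 : ∑ r, tt p' r * A.Utot w σ r
          = ((∑ k, tt p' k • V k) * (σ.map fun p => ∑ k, tt p k • V k).prod) w := by
        cases σ with
        | nil => simp [ih1]
        | cons p'' σ =>
          rw [hW' p']
          simp only [ih2, Finset.sum_mul, sum_apply, smul_mul_assoc, smul_apply]
      have h4 : ∑ r, A.δret p p' a r * A.Utot w σ r
          = (V p [a] • ((p' :: σ).map fun p => ∑ k, tt p k • V k).prod : Ser K Δ) w := by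
        rw [smul_apply, List.map_cons, List.prod_cons, ← h3, Finset.mul_sum]
        refine Finset.sum_congr rfl fun r _ => ?_
        rw [hret, mul_assoc]
      rw [h4]
      simp only [ih2]
      simp only [add_mul, Finset.sum_mul, sum_apply, smul_mul_assoc, smul_apply, add_apply,
        one_mul, mul_assoc, List.map_cons, List.prod_cons]
      ring

end Ser

/-! ### Nesting relations and type sequences -/

/-- The list `st` is the stack of open calls after position `j`. -/
def StackInv (ν : ℕ → ℕ → Prop) (j : ℕ) (st : List ℕ) : Prop :=
  st.Pairwise (· > ·) ∧ ∀ x, x ∈ st ↔ x ≤ j ∧ ∃ y, j < y ∧ ν x y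

theorem StackInv.zero {n : ℕ} {ν : ℕ → ℕ → Prop} (h : IsNestingRel n ν) : StackInv ν 0 [] := by
  refine ⟨List.Pairwise.nil, fun x => ?_⟩
  simp only [List.not_mem_nil, false_iff]
  rintro ⟨h1, y, -, h2⟩
  have := (h.1 x y h2).1
  omega

theorem StackInv.last {n : ℕ} {ν : ℕ → ℕ → Prop} (h : IsNestingRel n ν) {st : List ℕ}
    (hs : StackInv ν n st) : st = [] := by
  rw [List.eq_nil_iff_forall_not_mem]
  intro x hx
  obtain ⟨-, y, h1, h2⟩ := (hs.2 x).1 hx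
  have := (h.1 x y h2).2.2
  omega

theorem StackInv.int {ν : ℕ → ℕ → Prop} {j : ℕ} {st : List ℕ}
    (hs : StackInv ν j st) (hc : ¬ ∃ y, ν (j + 1) y) (hr : ¬ ∃ x, ν x (j + 1)) :
    StackInv ν (j + 1) st := by
  refine ⟨hs.1, fun x => ?_⟩
  rw [hs.2 x]
  constructor
  · rintro ⟨h1, y, h2, h3⟩
    refine ⟨by omega, y, ?_, h3⟩
    rcases Nat.lt_or_ge (j + 1) y with h | h
    · exact h
    · have : y = j + 1 := by omega
      subst this
      exact absurd ⟨x, h3⟩ hr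
  · rintro ⟨h1, y, h2, h3⟩
    refine ⟨?_, y, by omega, h3⟩
    by_contra hx
    have : x = j + 1 := by omega
    subst this
    exact hc ⟨y, h3⟩

theorem StackInv.call {n : ℕ} {ν : ℕ → ℕ → Prop} (h : IsNestingRel n ν) {j : ℕ} {st : List ℕ}
    (hs : StackInv ν j st) (hc : ∃ y, ν (j + 1) y) :
    StackInv ν (j + 1) ((j + 1) :: st) := by
  obtain ⟨y, hy⟩ := hc
  refine ⟨List.Pairwise.cons ?_ hs.1, fun x => ?_⟩
  · intro x hx
    have := ((hs.2 x).1 hx).1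
    omega
  rw [List.mem_cons, hs.2 x]
  constructor
  · rintro (rfl | ⟨h1, y', h2, h3⟩)
    · exact ⟨le_rfl, y, (h.1 _ _ hy).2.1, hy⟩
    · refine ⟨by omega, y', ?_, h3⟩
      rcases Nat.lt_or_ge (j + 1) y' with h' | h'
      · exact h'
      · have : y' = j + 1 := by omega
        subst this
        have h4 := (h.1 _ _ hy).2.1
        rcases h.2.2.2 _ _ _ _ h3 hy (by omega) with h5 | h5 <;> omega
  · rintro ⟨h1, y', h2, h3⟩
    by_cases hx : x = j + 1
    · exact Or.inl hx
    · exact Or.inr ⟨by omega, y', by omega, h3⟩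

theorem StackInv.ret {n : ℕ} {ν : ℕ → ℕ → Prop} (h : IsNestingRel n ν) {j : ℕ} {st : List ℕ}
    (hs : StackInv ν j st) {i : ℕ} (hr : ν i (j + 1)) :
    ∃ st', st = i :: st' ∧ StackInv ν (j + 1) st' := by
  have hi : i ∈ st := (hs.2 i).2 ⟨by have := (h.1 _ _ hr).2.1; omega, j + 1, by omega, hr⟩
  match st, hs, hi with
  | s :: st', hs, hi =>
    obtain ⟨hp, hm⟩ := hs
    rw [List.pairwise_cons] at hp
    have hsi : s = i := by
      rcases List.mem_cons.1 hi with hi | hi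
      · exact hi.symm
      · have h1 := hp.1 i hi
        obtain ⟨h2, y, h3, h4⟩ := (hm s).1 List.mem_cons_self
        rcases h.2.2.2 _ _ _ _ hr h4 h1 with h5 | h5 <;> omega
    subst hsi
    refine ⟨st', rfl, hp.2, fun x => ?_⟩
    have hmx := hm x
    rw [List.mem_cons] at hmx
    constructor
    · intro hx
      obtain ⟨h1, y, h2, h3⟩ := hmx.1 (Or.inr hx)
      refine ⟨by omega, y, ?_, h3⟩
      rcases Nat.lt_or_ge (j + 1) y with h' | h'
      · exact h'
      · have : y = j + 1 := by omega
        subst this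
        have := h.2.2.1 _ _ _ h3 hr
        have := hp.1 x hx
        omega
    · rintro ⟨h1, y, h2, h3⟩
      have hx : x ≤ j := by
        by_contra hx
        have : x = j + 1 := by omega
        subst this
        have h4 := (h.1 _ _ hr).2.1
        rcases h.2.2.2 _ _ _ _ hr h3 h4 with h5 | h5 <;> omega
      rcases hmx.2 ⟨hx, y, by omega, h3⟩ with h6 | h6
      · subst h6
        have := h.2.1 _ _ _ hr h3
        omega
      · exact h6

/-- The relation read off from a type sequence. -/
def relOf : List Ty → ℕ → List ℕ → ℕ → ℕ → Prop
  | [], _, _ => fun _ _ => False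
  | Ty.i :: t, j, st => relOf t (j + 1) st
  | Ty.c :: t, j, st => relOf t (j + 1) ((j + 1) :: st)
  | Ty.r :: t, j, s :: st => fun x y => (x = s ∧ y = j + 1) ∨ relOf t (j + 1) st x y
  | Ty.r :: _, _, [] => fun _ _ => False

/-- Balanced type sequences. -/
def Bal : List Ty → ℕ → Prop
  | [], k => k = 0
  | Ty.i :: t, k => Bal t k
  | Ty.c :: t, k => Bal t (k + 1)
  | Ty.r :: t, k + 1 => Bal t k
  | Ty.r :: _, 0 => False

open Classical in
/-- The type of a position. -/
noncomputable def typ (ν : ℕ → ℕ → Prop) (j : ℕ) : Ty :=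
  if ∃ i, ν j i then Ty.c else if ∃ i, ν i j then Ty.r else Ty.i

theorem typ_congr {ν ν' : ℕ → ℕ → Prop} {k : ℕ} (h1 : (∃ y, ν k y) ↔ ∃ y, ν' k y)
    (h2 : (∃ y, ν y k) ↔ ∃ y, ν' y k) : typ ν k = typ ν' k := by
  unfold typ
  by_cases a : ∃ y, ν' k y
  · rw [if_pos a, if_pos (h1.2 a)]
  · rw [if_neg a, if_neg (fun h => a (h1.1 h))]
    by_cases b : ∃ y, ν' y k
    · rw [if_pos b, if_pos (h2.2 b)]
    · rw [if_neg b, if_neg (fun h => b (h2.1 h))]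

/-- Types of the positions `j+1, …, j+m`. -/
noncomputable def types (ν : ℕ → ℕ → Prop) (j m : ℕ) : List Ty :=
  (List.range' (j + 1) m).map (typ ν)

theorem types_succ (ν : ℕ → ℕ → Prop) (j m : ℕ) :
    types ν j (m + 1) = typ ν (j + 1) :: types ν (j + 1) m := by
  simp [types, List.range'_succ]

theorem nest_types {n : ℕ} {ν : ℕ → ℕ → Prop} (h : IsNestingRel n ν) (m : ℕ) :
    ∀ j st, j + m = n → StackInv ν j st →
      Bal (types ν j m) st.length ∧
      ∀ x y, relOf (types ν j m) j st x y ↔ j < y ∧ ν x y := by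
  induction m with
  | zero =>
    intro j st hj hs
    have hj : j = n := by omega
    subst hj
    rw [hs.last h]
    refine ⟨by simp [types, Bal], fun x y => ?_⟩
    simp only [types, List.range'_zero, List.map_nil, relOf, false_iff]
    rintro ⟨h1, h2⟩
    have := (h.1 _ _ h2).2.2
    omega
  | succ m ih =>
    intro j st hj hs
    rw [types_succ]
    by_cases hc : ∃ y, ν (j + 1) y
    · have ht : typ ν (j + 1) = Ty.c := by simp [typ, hc]
      rw [ht]
      have h1 := hs.call h hc
      obtain ⟨hb, hrel⟩ := ih (j + 1) _ (by omega) h1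
      refine ⟨hb, fun x y => ?_⟩
      rw [relOf, hrel]
      constructor
      · rintro ⟨h2, h3⟩; exact ⟨by omega, h3⟩
      · rintro ⟨h2, h3⟩
        refine ⟨?_, h3⟩
        by_contra hy
        have : y = j + 1 := by omega
        subst this
        obtain ⟨z, hz⟩ := hc
        have h4 := (h.1 _ _ h3).2.1
        have h5 := (h.1 _ _ hz).2.1
        rcases h.2.2.2 _ _ _ _ h3 hz h4 with h5 | h5 <;> omega
    · by_cases hr : ∃ x, ν x (j + 1)
      · have ht : typ ν (j + 1) = Ty.r := by simp [typ, hc, hr]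
        rw [ht]
        obtain ⟨i, hi⟩ := hr
        obtain ⟨st', rfl, h1⟩ := hs.ret h hi
        obtain ⟨hb, hrel⟩ := ih (j + 1) _ (by omega) h1
        refine ⟨hb, fun x y => ?_⟩
        show ((x = i ∧ y = j + 1) ∨ relOf (types ν (j + 1) m) (j + 1) st' x y) ↔ _
        rw [hrel]
        constructor
        · rintro (⟨rfl, rfl⟩ | ⟨h2, h3⟩)
          · exact ⟨by omega, hi⟩
          · exact ⟨by omega, h3⟩
        · rintro ⟨h2, h3⟩
          by_cases hy : y = j + 1
          · subst hy
            exact Or.inl ⟨h.2.2.1 _ _ _ h3 hi, rfl⟩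
          · exact Or.inr ⟨by omega, h3⟩
      · have ht : typ ν (j + 1) = Ty.i := by simp [typ, hc, hr]
        rw [ht]
        obtain ⟨hb, hrel⟩ := ih (j + 1) _ (by omega) (hs.int hc hr)
        refine ⟨hb, fun x y => ?_⟩
        rw [relOf, hrel]
        constructor
        · rintro ⟨h2, h3⟩; exact ⟨by omega, h3⟩
        · rintro ⟨h2, h3⟩
          refine ⟨?_, h3⟩
          by_contra hy
          have : y = j + 1 := by omega
          subst this
          exact hr ⟨x, h3⟩

/-- Properties of the relation read off from a balanced type sequence. -/
theorem relOf_props (t : List Ty) : ∀ (j : ℕ) (st : List ℕ), Bal t st.length →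
    st.Pairwise (· > ·) → (∀ x ∈ st, x ≤ j) →
    (∀ x y, relOf t j st x y → (x ∈ st ∨ j < x) ∧ j < y ∧ x < y ∧ y ≤ j + t.length) ∧
    (∀ x y y', relOf t j st x y → relOf t j st x y' → y = y') ∧
    (∀ x x' y, relOf t j st x y → relOf t j st x' y → x = x') ∧
    (∀ x y x' y', relOf t j st x y → relOf t j st x' y' → x < x' → y < x' ∨ y' < y) ∧
    (∀ x ∈ st, ∃ y, relOf t j st x y) ∧
    types (relOf t j st) j t.length = t := by
  induction t with
  | nil =>
    intro j st hb _ _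
    have hst : st = [] := by simpa [Bal] using hb
    subst hst
    simp [relOf, types]
  | cons ty t ih =>
    intro j st hb hp hle
    have htyp : ∀ (ν ν' : ℕ → ℕ → Prop), (∀ k, j + 1 < k → typ ν k = typ ν' k) →
        ∀ m, types ν (j + 1) m = types ν' (j + 1) m := by
      intro ν ν' hν m
      refine List.map_congr_left fun k hk => hν k ?_
      rw [List.mem_range'] at hk
      obtain ⟨i, _, rfl⟩ := hk
      omega
    rw [List.length_cons, types_succ]
    cases ty with
    | i =>
      obtain ⟨a1, a2, a3, a4, a5, a6⟩ := ih (j + 1) st hb hp (fun x hx => by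
        have := hle x hx; omega)
      simp only [relOf]
      refine ⟨fun x y hxy => ?_, a2, a3, a4, a5, ?_⟩
      · obtain ⟨b1, b2, b3, b4⟩ := a1 x y hxy
        refine ⟨b1.imp id fun h => by omega, by omega, b3, by omega⟩
      · rw [a6]
        congr 1
        have h1 : ¬ ∃ y, relOf t (j + 1) st (j + 1) y := by
          rintro ⟨y, hy⟩
          rcases (a1 _ _ hy).1 with h | h
          · have := hle _ h; omega
          · omega
        have h2 : ¬ ∃ x, relOf t (j + 1) st x (j + 1) := by
          rintro ⟨y, hy⟩
          have := (a1 _ _ hy).2.1; omega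
        rw [typ, if_neg h1, if_neg h2]
    | c =>
      obtain ⟨a1, a2, a3, a4, a5, a6⟩ := ih (j + 1) ((j + 1) :: st) hb
        (List.Pairwise.cons (fun x hx => by have := hle x hx; omega) hp) (fun x hx => by
          rcases List.mem_cons.1 hx with h | h
          · omega
          · have := hle x h; omega)
      simp only [relOf]
      refine ⟨fun x y hxy => ?_, a2, a3, a4,
        fun x hx => a5 x (List.mem_cons_of_mem _ hx), ?_⟩
      · obtain ⟨b1, b2, b3, b4⟩ := a1 x y hxy
        refine ⟨?_, by omega, b3, by omega⟩
        rcases b1 with b1 | b1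
        · rcases List.mem_cons.1 b1 with h | h
          · right; omega
          · exact Or.inl h
        · right; omega
      · rw [a6]
        congr 1
        rw [typ, if_pos (a5 (j + 1) List.mem_cons_self)]
    | r =>
      cases st with
      | nil => exact absurd hb (by simp [Bal])
      | cons s st =>
        rw [List.pairwise_cons] at hp
        have hsj := hle s List.mem_cons_self
        obtain ⟨a1, a2, a3, a4, a5, a6⟩ := ih (j + 1) st hb hp.2 (fun x hx => by
          have := hle x (List.mem_cons_of_mem _ hx); omega)
        have hs : s ∉ st := fun h => absurd (hp.1 s h) (lt_irrefl s)
        have hsn : ∀ y, ¬ relOf t (j + 1) st s y := by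
          intro y hy
          rcases (a1 _ _ hy).1 with h | h
          · exact hs h
          · omega
        have hjn : ∀ x, ¬ relOf t (j + 1) st x (j + 1) := by
          intro x hy
          have := (a1 _ _ hy).2.1; omega
        have hjc : ∀ y, ¬ relOf t (j + 1) st (j + 1) y := by
          intro y hy
          rcases (a1 _ _ hy).1 with h | h
          · have := hp.1 _ h; omega
          · omega
        refine ⟨?_, ?_, ?_, ?_, ?_, ?_⟩
        · rintro x y (⟨rfl, rfl⟩ | hxy)
          · exact ⟨Or.inl List.mem_cons_self, by omega, by omega, by omega⟩
          · obtain ⟨b1, b2, b3, b4⟩ := a1 x y hxy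
            exact ⟨b1.imp (List.mem_cons_of_mem _) fun h => by omega, by omega, b3, by omega⟩
        · rintro x y y' (⟨rfl, rfl⟩ | h1) (⟨h2, rfl⟩ | h2)
          · rfl
          · exact absurd h2 (hsn _)
          · subst h2; exact absurd h1 (hsn _)
          · exact a2 _ _ _ h1 h2
        · rintro x x' y (⟨rfl, rfl⟩ | h1) (⟨h2, h3⟩ | h2)
          · exact h2.symm
          · exact absurd h2 (hjn _)
          · subst h3; exact absurd h1 (hjn _)
          · exact a3 _ _ _ h1 h2
        · rintro x y x' y' (⟨rfl, rfl⟩ | h1) (⟨rfl, rfl⟩ | h2) hlt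
          · omega
          · rcases (a1 _ _ h2).1 with h | h
            · have := hp.1 _ h; omega
            · exact Or.inl h
          · right; exact (a1 _ _ h1).2.1
          · exact a4 _ _ _ _ h1 h2 hlt
        · intro x hx
          rcases List.mem_cons.1 hx with rfl | hx
          · exact ⟨j + 1, Or.inl ⟨rfl, rfl⟩⟩
          · obtain ⟨y, hy⟩ := a5 x hx
            exact ⟨y, Or.inr hy⟩
        · rw [htyp _ (relOf t (j + 1) st), a6]
          · congr 1
            have h1 : ¬ ∃ y, relOf (Ty.r :: t) j (s :: st) (j + 1) y := by
              rintro ⟨y, ⟨h, -⟩ | h⟩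
              · omega
              · exact hjc _ h
            rw [typ, if_neg h1, if_pos ⟨s, Or.inl ⟨rfl, rfl⟩⟩]
          · intro k hk
            have e1 : (∃ y, relOf (Ty.r :: t) j (s :: st) k y)
                ↔ ∃ y, relOf t (j + 1) st k y := by
              constructor
              · rintro ⟨y, ⟨h, -⟩ | h⟩
                · omega
                · exact ⟨y, h⟩
              · rintro ⟨y, h⟩; exact ⟨y, Or.inr h⟩
            have e2 : (∃ y, relOf (Ty.r :: t) j (s :: st) y k)
                ↔ ∃ y, relOf t (j + 1) st y k := by
              constructor
              · rintro ⟨y, ⟨-, h⟩ | h⟩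
                · omega
                · exact ⟨y, h⟩
              · rintro ⟨y, h⟩; exact ⟨y, Or.inr h⟩
            exact typ_congr e1 e2

theorem relOf_nesting (t : List Ty) (ht : Bal t 0) :
    IsNestingRel t.length (relOf t 0 []) ∧ types (relOf t 0 []) 0 t.length = t := by
  obtain ⟨a1, a2, a3, a4, -, a6⟩ := relOf_props t 0 [] ht List.Pairwise.nil (by simp)
  refine ⟨⟨?_, a2, a3, a4⟩, a6⟩
  intro x y hxy
  obtain ⟨b1, b2, b3, b4⟩ := a1 x y hxy
  rcases b1 with b1 | b1
  · simp at b1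
  · exact ⟨b1, b3, by omega⟩

namespace WNWA

variable {K Δ : Type} [CommSemiring K]

theorem U_eq_zero (A : WNWA K Δ) (t : List Ty) : ∀ (w : List Δ) (σ : List A.Q) (p : A.Q),
    ¬ Bal t σ.length → A.U t w σ p = 0 := by
  induction t with
  | nil =>
    intro w σ p hb
    cases σ with
    | nil => simp [Bal] at hb
    | cons q σ => cases w <;> simp [U]
  | cons ty t ih =>
    intro w σ p hb
    cases w with
    | nil => cases ty <;> simp [U]
    | cons a w =>
      cases ty with
      | i => rw [U]; exact Finset.sum_eq_zero fun r _ => by rw [ih _ _ _ hb, mul_zero]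
      | c => rw [U]; exact Finset.sum_eq_zero fun r _ => by rw [ih _ (p :: σ) _ hb, mul_zero]
      | r =>
        cases σ with
        | nil => simp [U]
        | cons q σ =>
          rw [U]; exact Finset.sum_eq_zero fun r _ => by rw [ih _ _ _ hb, mul_zero]

/-- Sum over nested words with given word of a function of the type sequence. -/
theorem sum_nested (g : List Ty → K) (hg : ∀ t, ¬ Bal t 0 → g t = 0) (w : List Δ) (hw : w ≠ []) :
    projNW (fun nw : NestedWord Δ => g (types nw.rel 0 nw.word.length)) w
      = ∑ t ∈ tyLists w.length, g t := by
  classical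
  have hbij : Set.BijOn (fun nw : NestedWord Δ => types nw.rel 0 nw.word.length)
      {nw | nw.word = w} {t | t.length = w.length ∧ Bal t 0} := by
    refine ⟨?_, ?_, ?_⟩
    · intro nw hnw
      have hnw : nw.word = w := hnw
      refine ⟨by simp [types, hnw], ?_⟩
      exact (nest_types nw.isNest nw.word.length 0 [] (by omega) (StackInv.zero nw.isNest)).1
    · intro nw hnw nw' hnw' heq
      have h1 := (nest_types nw.isNest nw.word.length 0 [] (by omega) (StackInv.zero nw.isNest)).2
      have h2 := (nest_types nw'.isNest nw'.word.length 0 [] (by omega) (StackInv.zero nw'.isNest)).2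
      have hnw : nw.word = w := hnw
      have hnw' : nw'.word = w := hnw'
      have heq : types nw.rel 0 nw.word.length = types nw'.rel 0 nw'.word.length := heq
      have hrel : nw.rel = nw'.rel := by
        funext x y
        have h3 := h1 x y
        have h4 := h2 x y
        rw [← heq, h3] at h4
        apply propext
        constructor
        · intro h
          have := nw.isNest.1 _ _ h
          exact (h4.1 ⟨by omega, h⟩).2
        · intro h
          have := nw'.isNest.1 _ _ h
          exact (h4.2 ⟨by omega, h⟩).2
      obtain ⟨w1, n1, r1, i1⟩ := nw
      obtain ⟨w2, n2, r2, i2⟩ := nw'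
      simp only at hnw hnw' hrel
      subst hnw hnw' hrel
      rfl
    · rintro t ⟨ht, hb⟩
      obtain ⟨h1, h2⟩ := relOf_nesting t hb
      rw [ht] at h1 h2
      exact ⟨⟨w, hw, relOf t 0 [], h1⟩, rfl, h2⟩
  unfold projNW
  have := finsum_mem_eq_of_bijOn _ hbij (f := fun nw => g (types nw.rel 0 nw.word.length))
    (g := g) (fun _ _ => rfl)
  refine this.trans ?_
  have hset : {t : List Ty | t.length = w.length ∧ Bal t 0}
      = ↑((tyLists w.length).filter fun t => Bal t 0) := by
    ext t; simp [mem_tyLists]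
  rw [hset, finsum_mem_coe_finset, Finset.sum_filter]
  refine Finset.sum_congr rfl fun t _ => ?_
  split_ifs with h
  · rfl
  · exact (hg t h).symm

end WNWA

/-! ### The behavior in terms of the stack semantics -/

/-- Extend a history `h` (valid up to position `j`) by `m` further states. -/
def extRun {Q : Type} {m : ℕ} (h : ℕ → Q) (j : ℕ) (f : Fin m → Q) : ℕ → Q := fun k =>
  if k ≤ j then h k else if hk : k - (j + 1) < m then f ⟨k - (j + 1), hk⟩ else h 0

theorem extRun_cons {Q : Type} {m : ℕ} (h : ℕ → Q) (j : ℕ) (r : Q) (f : Fin m → Q) :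
    extRun h j (Fin.cons r f : Fin (m + 1) → Q) = extRun (Function.update h (j + 1) r) (j + 1) f := by
  funext k
  unfold extRun
  by_cases h1 : k ≤ j
  · rw [if_pos h1, if_pos (by omega), Function.update_of_ne (by omega)]
  · rw [if_neg h1]
    by_cases h2 : k = j + 1
    · subst h2
      rw [if_pos le_rfl, Function.update_self, dif_pos (by omega)]
      have : (⟨j + 1 - (j + 1), by omega⟩ : Fin (m + 1)) = 0 := by ext; simp
      rw [this, Fin.cons_zero]
    · rw [if_neg (by omega)]
      by_cases h3 : k - (j + 1) < m + 1
      · rw [dif_pos h3, dif_pos (by omega)]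
        have : (⟨k - (j + 1), h3⟩ : Fin (m + 1)) = Fin.succ ⟨k - (j + 1 + 1), by omega⟩ := by
          ext; simp; omega
        rw [this, Fin.cons_succ]
      · rw [dif_neg h3, dif_neg (by omega), Function.update_of_ne (by omega)]

theorem extRun_le {Q : Type} {m : ℕ} (h : ℕ → Q) (j : ℕ) (f : Fin m → Q) {k : ℕ} (hk : k ≤ j) :
    extRun h j f k = h k := if_pos hk

theorem sum_cons {K Q : Type} [AddCommMonoid K] [Fintype Q] (m : ℕ) (g : (Fin (m + 1) → Q) → K) :
    ∑ f, g f = ∑ r, ∑ f : Fin m → Q, g (Fin.cons r f) := by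
  rw [← Fintype.sum_prod_type', ← (Fin.consEquiv (fun _ : Fin (m + 1) => Q)).sum_comp]
  rfl

namespace WNWA

variable {K Δ : Type} [CommSemiring K]

theorem run_sum (A : WNWA K Δ) (nw : NestedWord Δ) (m : ℕ) :
    ∀ (j : ℕ) (st : List ℕ) (h : ℕ → A.Q), j + m = nw.word.length → StackInv nw.rel j st →
    ∑ f : Fin m → A.Q, (∏ k ∈ Finset.Ioc j nw.word.length, A.posWeight nw (extRun h j f) k)
        * A.κ (extRun h j f nw.word.length)
      = A.U (types nw.rel j m) (nw.word.drop j) (st.map fun i => h (i - 1)) (h j) := by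
  induction m with
  | zero =>
    intro j st h hj hs
    have hj : nw.word.length = j := by omega
    have hst : st = [] := by
      rw [← hj] at hs
      exact hs.last nw.isNest
    subst hst
    rw [hj, List.drop_eq_nil_of_le (by omega)]
    simp [types, U, extRun]
  | succ m ih =>
    intro j st h hj hs
    have hIoc : Finset.Ioc j nw.word.length
        = insert (j + 1) (Finset.Ioc (j + 1) nw.word.length) := by
      ext k; simp only [Finset.mem_Ioc, Finset.mem_insert]; omega
    have hdrop : nw.word.drop j = nw.letter (j + 1) :: nw.word.drop (j + 1) := by
      rw [List.drop_eq_getElem_cons (by omega : j < nw.word.length)]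
      congr 1
      rw [NestedWord.letter, List.getD_eq_getElem _ _ (by omega : j + 1 - 1 < nw.word.length)]
      rfl
    rw [sum_cons, types_succ, hdrop]
    have hstep : ∀ (r : A.Q) (st' : List ℕ) (σ : List A.Q) (c : K),
        StackInv nw.rel (j + 1) st' →
        (st'.map fun i => Function.update h (j + 1) r (i - 1)) = σ →
        (∀ ρ : ℕ → A.Q, (∀ k ≤ j, ρ k = h k) → ρ (j + 1) = r → A.posWeight nw ρ (j + 1) = c) →
        ∑ f : Fin m → A.Q,
          (∏ k ∈ Finset.Ioc j nw.word.length,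
            A.posWeight nw (extRun h j (Fin.cons r f : Fin (m + 1) → A.Q)) k)
          * A.κ (extRun h j (Fin.cons r f : Fin (m + 1) → A.Q) nw.word.length)
        = c * A.U (types nw.rel (j + 1) m) (nw.word.drop (j + 1)) σ r := by
      intro r st' σ c hst' hσ hc
      have := ih (j + 1) st' (Function.update h (j + 1) r) (by omega) hst'
      rw [hσ, Function.update_self] at this
      rw [← this, Finset.mul_sum]
      refine Finset.sum_congr rfl fun f _ => ?_
      rw [hIoc, Finset.prod_insert (by simp), extRun_cons, mul_assoc]
      congr 1
      apply hc
      · intro k hk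
        rw [extRun_le _ _ _ (by omega), Function.update_of_ne (by omega)]
      · rw [extRun_le _ _ _ le_rfl, Function.update_self]
    have hmap : ∀ (r : A.Q) (st' : List ℕ), (∀ x ∈ st', x ≤ j + 1) →
        (st'.map fun i => Function.update h (j + 1) r (i - 1)) = st'.map fun i => h (i - 1) := by
      intro r st' hx
      refine List.map_congr_left fun i hi => ?_
      have := hx i hi
      rw [Function.update_of_ne (by omega)]
    by_cases hc : ∃ y, nw.rel (j + 1) y
    · have ht : typ nw.rel (j + 1) = Ty.c := by simp [typ, hc]
      rw [ht, U]
      have h1 := hs.call nw.isNest hc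
      refine Finset.sum_congr rfl fun r _ => hstep r _ _ _ h1 ?_ ?_
      · rw [hmap r _ (fun x hx => ((h1.2 x).1 hx).1)]
        simp
      · intro ρ hρ hρr
        have hc' : nw.IsCall (j + 1) := hc
        rw [posWeight, if_pos hc', hρr, Nat.add_sub_cancel, hρ j le_rfl]
    · have hc' : ¬ nw.IsCall (j + 1) := hc
      by_cases hr : ∃ x, nw.rel x (j + 1)
      · have ht : typ nw.rel (j + 1) = Ty.r := by simp [typ, hc, hr]
        rw [ht]
        have hr' : nw.IsReturn (j + 1) := hr
        obtain ⟨st', hst, h1⟩ := hs.ret nw.isNest hr'.choose_spec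
        have hlt := (nw.isNest.1 _ _ hr'.choose_spec).2.1
        rw [hst, List.map_cons, U]
        refine Finset.sum_congr rfl fun r _ => hstep r _ _ _ h1 ?_ ?_
        · rw [hmap r _ (fun x hx => ((h1.2 x).1 hx).1)]
        · intro ρ hρ hρr
          rw [posWeight, if_neg hc', dif_pos hr', hρr, Nat.add_sub_cancel, hρ j le_rfl,
            hρ _ (by omega)]
      · have ht : typ nw.rel (j + 1) = Ty.i := by simp [typ, hc, hr]
        rw [ht, U]
        have h1 := hs.int hc hr
        have hr' : ¬ nw.IsReturn (j + 1) := hr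
        refine Finset.sum_congr rfl fun r _ => hstep r _ _ _ h1 ?_ ?_
        · rw [hmap r _ (fun x hx => ((h1.2 x).1 hx).1)]
        · intro ρ hρ hρr
          rw [posWeight, if_neg hc', dif_neg hr', hρr, Nat.add_sub_cancel, hρ j le_rfl]

theorem posWeight_congr (A : WNWA K Δ) (nw : NestedWord Δ) (ρ ρ' : ℕ → A.Q) (n j : ℕ)
    (hj : j ≤ n) (h : ∀ k ≤ n, ρ k = ρ' k) : A.posWeight nw ρ j = A.posWeight nw ρ' j := by
  unfold posWeight
  rw [h j hj, h (j - 1) (by omega)]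
  split_ifs with h1 h2
  · rfl
  · have := (nw.isNest.1 _ _ h2.choose_spec).2.1
    rw [h _ (by omega)]
  · rfl

theorem behavior_eq (A : WNWA K Δ) (nw : NestedWord Δ) :
    A.behavior nw
      = ∑ p, A.ι p * A.U (types nw.rel 0 nw.word.length) nw.word [] p := by
  unfold behavior
  rw [sum_cons]
  refine Finset.sum_congr rfl fun p _ => ?_
  have := A.run_sum nw nw.word.length 0 [] (fun _ => p) (by omega) (StackInv.zero nw.isNest)
  simp only [List.drop_zero, List.map_nil] at this
  rw [← this, Finset.mul_sum]
  refine Finset.sum_congr rfl fun f _ => ?_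
  have hcl : ∀ k ≤ nw.word.length,
      clampFun (Fin.cons p f : Fin (nw.len + 1) → A.Q) k = extRun (fun _ => p) 0 f k := by
    intro k hk
    unfold clampFun extRun
    have hmin : min k nw.len = k := min_eq_left hk
    cases k with
    | zero =>
      rw [if_pos le_rfl]
      have : (⟨min 0 nw.len, Nat.lt_succ_of_le (min_le_right _ _)⟩ : Fin (nw.len + 1)) = 0 := by
        ext; simp
      rw [this, Fin.cons_zero]
    | succ k =>
      have hk' : k < nw.len := hk
      rw [if_neg (by omega), dif_pos (by omega)]
      have : (⟨min (k + 1) nw.len, Nat.lt_succ_of_le (min_le_right _ _)⟩ : Fin (nw.len + 1))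
          = Fin.succ ⟨k, hk'⟩ := by
        ext; simp; omega
      rw [this, Fin.cons_succ]
      congr 1
  rw [mul_assoc, Fin.cons_zero]
  congr 2
  · unfold runWeight
    have : Finset.Icc 1 nw.len = Finset.Ioc 0 nw.word.length := by
      ext k; simp only [Finset.mem_Icc, Finset.mem_Ioc, NestedWord.len]; omega
    rw [this]
    refine Finset.prod_congr rfl fun k hk => ?_
    rw [Finset.mem_Ioc] at hk
    exact A.posWeight_congr nw _ _ nw.word.length k hk.2 hcl
  · refine congrArg A.κ (Eq.trans ?_ (hcl nw.word.length le_rfl))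
    unfold clampFun
    congr 1
    ext
    simp [NestedWord.len]

theorem proj_behavior (A : WNWA K Δ) (w : List Δ) (hw : w ≠ []) :
    projNW A.behavior w = ∑ p, A.ι p * A.Utot w [] p := by
  have h := sum_nested (fun t => ∑ p, A.ι p * A.U t w [] p) (fun t ht => by
    refine Finset.sum_eq_zero fun p _ => ?_
    rw [A.U_eq_zero t w [] p ht, mul_zero]) w hw
  have h2 : projNW A.behavior w = projNW (fun nw : NestedWord Δ =>
      ∑ p, A.ι p * A.U (types nw.rel 0 nw.word.length) w [] p) w := by
    unfold projNW
    refine finsum_congr fun nw => finsum_congr fun hnw => ?_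
    subst hnw
    exact behavior_eq A nw
  rw [h2, h, Finset.sum_comm]
  simp only [Utot, Finset.mul_sum]

end WNWA

/-! ### The automaton of a quadratic family -/

namespace Ser

variable {K Δ : Type} [CommSemiring K]

open Classical in
/-- Semantics of the states. -/
noncomputable def stVal {I : Type} [Fintype I] (F : I → Ser K Δ) (A : Δ → I → I → K)
    (B : Δ → I → I → I → K) : I × Option I → Ser K Δ
  | (i, none) => fun w => match w with
    | [] => F i []
    | a :: w => (∑ j, A a i j • F j) w
  | (i, some k) => fun w => match w with
    | [] => 0
    | a :: w => (∑ j, B a i j k • (F j * F k)) w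

open Classical in
/-- The continuation after a return. -/
noncomputable def contW {I : Type} (F : I → Ser K Δ) : I × Option I → I × Option I → K
  | (_, none), _ => 0
  | (_, some k), t => if t.1 = k ∧ F k [] = 0 then 1 else 0

open Classical in
/-- The automaton. -/
noncomputable def auto {I : Type} [Fintype I] (F : I → Ser K Δ) (A : Δ → I → I → K)
    (B : Δ → I → I → I → K) (i₀ : I) : WNWA K Δ where
  Q := I × Option I
  ι p := if p.1 = i₀ then 1 else 0
  δcall p a q := match p with
    | (_, none) => 0
    | (i, some k) => B a i q.1 k
  δint p a q := match p with
    | (i, none) => A a i q.1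
    | (_, some _) => 0
  δret s p b t := stVal F A B s [b] * contW F p t
  κ p := stVal F A B p []

theorem exists_auto {I : Type} [Fintype I] (F : I → Ser K Δ) (A : Δ → I → I → K)
    (B : Δ → I → I → I → K)
    (hB : ∀ a i j k, B a i j k ≠ 0 → F j [] = 0 ∧ F k [] = 0)
    (hd : ∀ a i, d a (F i) = ∑ j, A a i j • F j + ∑ k, ∑ j, B a i j k • (F j * F k)) (i₀ : I) :
    ∃ N : WNWA K Δ, ∀ w, w ≠ [] → projNW N.behavior w = F i₀ w := by
  classical
  refine ⟨auto F A B i₀, fun w hw => ?_⟩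
  have hsum : ∀ i, ∑ o, stVal F A B (i, o) = F i := by
    intro i
    refine ext_d ?_ fun a => ?_
    · rw [sum_apply, Fintype.sum_option]; simp [stVal]
    · rw [hd, map_sum, Fintype.sum_option]; rfl
  have hsum' : ∀ c : I → K, ∑ q : I × Option I, c q.1 • stVal F A B q = ∑ j, c j • F j := by
    intro c
    rw [Fintype.sum_prod_type]
    refine Finset.sum_congr rfl fun j _ => ?_
    show ∑ o, c j • stVal F A B (j, o) = _
    rw [← Finset.smul_sum, hsum]
  have hsum'' : ∀ c : I → K, ∑ q : I × Option I, c q.1 * stVal F A B q [] = ∑ j, c j * F j [] := by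
    intro c
    have := congrFun (hsum' c) []
    rw [sum_apply, sum_apply] at this
    exact this
  rw [WNWA.proj_behavior _ w hw]
  have key := (Utot_sem (auto F A B i₀) (stVal F A B) (contW F) (fun p => rfl) ?_ ?_ ?_
      (fun s p b t => rfl) w).1
  · simp only [key]
    have := congrFun (hsum' fun i => if i = i₀ then 1 else 0) w
    rw [sum_apply, sum_apply] at this
    refine Eq.trans this ?_
    simp
  · rintro ⟨i, _ | k⟩
    · simp [contW]
    · refine (hsum'' fun j => if j = k ∧ F k [] = 0 then 1 else 0).trans ?_
      refine Finset.sum_eq_zero fun j _ => ?_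
      split_ifs with h
      · rw [h.1, h.2, mul_zero]
      · simp
  · rintro a ⟨i, _ | k⟩
    · simp [auto]
    · refine (hsum'' fun j => B a i j k).trans ?_
      refine Finset.sum_eq_zero fun j _ => ?_
      by_cases h : B a i j k = 0
      · rw [h, zero_mul]
      · rw [(hB a i j k h).1, mul_zero]
  · rintro a ⟨i, _ | k⟩
    · have h1 := hsum' fun j => A a i j
      have h2 : d a (stVal F A B (i, none)) = ∑ j, A a i j • F j := rfl
      rw [h2, ← h1]
      simp only [auto, zero_smul, Finset.sum_const_zero, zero_mul, add_zero]
      rfl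
    · have h1 := hsum' fun j => B a i j k
      have h2 : d a (stVal F A B (i, some k)) = ∑ j, B a i j k • (F j * F k) := rfl
      have h3 := hsum' fun j => if j = k ∧ F k [] = 0 then 1 else 0
      refine h2.trans ?_
      refine Eq.trans ?_ (congrArg₂ (· + ·) (?_ : (0 : Ser K Δ) = _)
        (congrArg₂ (· * ·) h1.symm h3.symm))
      · rw [zero_add, Finset.sum_mul]
        refine Finset.sum_congr rfl fun j _ => ?_
        by_cases h : B a i j k = 0
        · simp [h]
        · simp [(hB a i j k h).2]
      · simp [auto]

end Ser

/-- **Proposition (Mathissen).** Every algebraic formal power series is the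
projection of a regular nested word series. -/
theorem algebraic_is_proj_of_regular
    (K Δ : Type) [CommSemiring K] (h01 : (0 : K) ≠ 1)
    (R : List Δ → K) (hR : IsAlgebraicSeries K Δ R) :
    ∃ S : NestedWord Δ → K, NWRegular S ∧ ∀ w, projNW S w = R w := by
  obtain ⟨X, _, P, Sol, hfin, hP, hsol, hS, x₀, hR⟩ := hR
  let S : X → Ser K Δ := Sol
  have hsol' : ∀ x, S x = ∑ u ∈ (hfin x).toFinset, P x u • Ser.wval S u := by
    intro x
    ext w
    rw [Ser.sum_apply]
    refine (hsol x w).trans ?_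
    rw [finsum_eq_sum_of_support_subset (s := (hfin x).toFinset)]
    · refine Finset.sum_congr rfl fun u _ => ?_
      rw [Ser.smul_apply]
      congr 1
      exact Ser.wordSeries_eq S u w
    · intro u hu
      rw [Function.mem_support] at hu
      simp only [Set.Finite.coe_toFinset, Function.mem_support]
      exact left_ne_zero_of_mul hu
  obtain ⟨F, hF, -, hSF, hfac⟩ := Ser.greibach P hfin hP S hS hsol'
  obtain ⟨_, A, B, hB, hd⟩ := Ser.quadratic hF hfac
  obtain ⟨N, hN⟩ := Ser.exists_auto (fun i : F => i.1) A B hB hd ⟨S x₀, hSF x₀⟩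
  refine ⟨N.behavior, ⟨N, fun _ => rfl⟩, fun w => ?_⟩
  rw [hR w]
  by_cases hw : w = []
  · subst hw
    rw [hS x₀]
    unfold projNW
    rw [← finsum_zero (α := NestedWord Δ)]
    refine finsum_congr fun nw => ?_
    have : IsEmpty (nw.word = []) := ⟨nw.ne⟩
    exact finsum_of_isEmpty _
  · exact hN w hw
end

section
/- Let K be a commutative semiring and let S : Δ* → K be an algebraic formal power series. Then there exists an algebraic system (P_X)_{X∈𝒳} over (Δ ∪ 𝒳) with supp(P_X) ⊆ Δ ∪ Δ(Δ∪𝒳)*Δ for every X ∈ 𝒳, which (being weakly strict) has a unique solution (S_X)_{X∈𝒳}, such that S = S_X for some X ∈ 𝒳. -/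
namespace ANF

/-- Formal power series. -/
def Ser (K Δ : Type) : Type := List Δ → K

section Basic

variable {K Δ : Type} [CommSemiring K]

/-- Cauchy product, by recursion on the word. -/
def mulAux : List Δ → (List Δ → K) → (List Δ → K) → K
  | [], S, T => S [] * T []
  | a :: w, S, T => S [] * T (a :: w) + mulAux w (fun v => S (a :: v)) T

theorem mulAux_add_left (w : List Δ) (S S' T : List Δ → K) :
    mulAux w (fun v => S v + S' v) T = mulAux w S T + mulAux w S' T := by
  induction w generalizing S S' with
  | nil => simp [mulAux, add_mul]
  | cons a w ih =>
    simp only [mulAux]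
    rw [ih (fun v => S (a :: v)) (fun v => S' (a :: v))]
    ring

theorem mulAux_smul_left (w : List Δ) (c : K) (S T : List Δ → K) :
    mulAux w (fun v => c * S v) T = c * mulAux w S T := by
  induction w generalizing S with
  | nil => simp [mulAux, mul_assoc]
  | cons a w ih =>
    simp only [mulAux]
    rw [ih (fun v => S (a :: v))]
    ring

theorem mulAux_add_right (w : List Δ) (S T T' : List Δ → K) :
    mulAux w S (fun v => T v + T' v) = mulAux w S T + mulAux w S T' := by
  induction w generalizing S with
  | nil => simp [mulAux, mul_add]
  | cons a w ih =>
    simp only [mulAux]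
    rw [ih (fun v => S (a :: v))]
    ring

theorem mulAux_smul_right (w : List Δ) (c : K) (S T : List Δ → K) :
    mulAux w S (fun v => c * T v) = c * mulAux w S T := by
  induction w generalizing S with
  | nil => simp [mulAux, mul_left_comm]
  | cons a w ih =>
    simp only [mulAux]
    rw [ih (fun v => S (a :: v))]
    ring

theorem mulAux_zero_left (w : List Δ) (T : List Δ → K) :
    mulAux w (fun _ => 0) T = 0 := by
  induction w with
  | nil => simp [mulAux]
  | cons a w ih => simp [mulAux, ih]

theorem mulAux_zero_right (w : List Δ) (S : List Δ → K) :
    mulAux w S (fun _ => 0) = 0 := by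
  induction w generalizing S with
  | nil => simp [mulAux]
  | cons a w ih => simp [mulAux, ih]

theorem mulAux_assoc (w : List Δ) (S T U : List Δ → K) :
    mulAux w (fun v => mulAux v S T) U = mulAux w S (fun v => mulAux v T U) := by
  induction w generalizing S T with
  | nil => simp [mulAux, mul_assoc]
  | cons a w ih =>
    simp only [mulAux]
    rw [mulAux_add_left, mulAux_smul_left, ih]
    ring

open Classical in
/-- The unit series. -/
noncomputable def oneAux : List Δ → K := fun w => if w = [] then 1 else 0

theorem oneAux_mul (w : List Δ) (T : List Δ → K) : mulAux w oneAux T = T w := by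
  cases w with
  | nil => simp [mulAux, oneAux]
  | cons a w => simp [mulAux, oneAux, mulAux_zero_left]

theorem mul_oneAux (w : List Δ) (T : List Δ → K) : mulAux w T oneAux = T w := by
  induction w generalizing T with
  | nil => simp [mulAux, oneAux]
  | cons a w ih => rw [mulAux, ih]; simp [oneAux]

theorem mulAux_eq_sum (w : List Δ) (S T : List Δ → K) :
    mulAux w S T = ∑ k ∈ Finset.range (w.length + 1), S (w.take k) * T (w.drop k) := by
  induction w generalizing S with
  | nil => simp [mulAux]
  | cons a w ih =>
    rw [mulAux, ih, List.length_cons, Finset.sum_range_succ' _ (w.length + 1)]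
    simp [add_comm]

noncomputable instance : AddCommMonoid (Ser K Δ) := inferInstanceAs (AddCommMonoid (List Δ → K))
noncomputable instance : Module K (Ser K Δ) := inferInstanceAs (Module K (List Δ → K))
noncomputable instance : Mul (Ser K Δ) := ⟨fun S T w => mulAux w S T⟩
noncomputable instance : One (Ser K Δ) := ⟨oneAux⟩

noncomputable instance : Semiring (Ser K Δ) :=
  { (inferInstance : AddCommMonoid (Ser K Δ)) with
    mul := (· * ·)
    one := 1
    mul_assoc := fun S T U => funext fun w => mulAux_assoc w S T U
    one_mul := fun S => funext fun w => oneAux_mul w S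
    mul_one := fun S => funext fun w => mul_oneAux w S
    left_distrib := fun S T U => funext fun w => mulAux_add_right w S T U
    right_distrib := fun S T U => funext fun w => mulAux_add_left w S T U
    zero_mul := fun S => funext fun w => mulAux_zero_left w S
    mul_zero := fun S => funext fun w => mulAux_zero_right w S }

noncomputable instance : Algebra K (Ser K Δ) :=
  Algebra.ofModule (fun c S T => funext fun w => mulAux_smul_left w c S T)
    (fun c S T => funext fun w => mulAux_smul_right w c S T)

theorem add_app (S T : Ser K Δ) (w : List Δ) : (S + T) w = S w + T w := rfl
theorem zero_app (w : List Δ) : (0 : Ser K Δ) w = 0 := rfl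
theorem smul_app (c : K) (S : Ser K Δ) (w : List Δ) : (c • S) w = c * S w := rfl
theorem mul_app (S T : Ser K Δ) (w : List Δ) : (S * T) w = mulAux w S T := rfl
theorem sum_app {ι : Type} (s : Finset ι) (f : ι → Ser K Δ) (w : List Δ) :
    (∑ i ∈ s, f i) w = ∑ i ∈ s, f i w := by
  classical
  induction s using Finset.induction_on with
  | empty => simp [zero_app]
  | insert a s ha ih => simp [Finset.sum_insert ha, add_app, ih]

open Classical in
/-- A letter as a series. -/
noncomputable def letter (a : Δ) : Ser K Δ := fun w => if w = [a] then 1 else 0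

theorem letter_nil (a : Δ) : (letter a : Ser K Δ) [] = 0 := by simp [letter]

/-- Evaluation of words. -/
noncomputable def ev {X : Type} (T : X → Ser K Δ) (u : List (Δ ⊕ X)) : Ser K Δ :=
  wordSeries T u

variable {X : Type}

theorem ev_nil (T : X → Ser K Δ) : ev T [] = 1 := by
  funext w
  simp only [ev, wordSeries]
  rfl

theorem ev_inl (T : X → Ser K Δ) (a : Δ) (u : List (Δ ⊕ X)) :
    ev T (Sum.inl a :: u) = letter a * ev T u := by
  funext w
  rw [mul_app]
  cases w with
  | nil => simp [ev, wordSeries, mulAux, letter]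
  | cons b w =>
    simp only [ev, wordSeries, mulAux, letter_nil, zero_mul, zero_add]
    by_cases h : b = a
    · subst h
      have : (fun v => (letter b : Ser K Δ) (b :: v)) = oneAux := by
        funext v; simp [letter, oneAux]
      rw [this, oneAux_mul]; simp
    · have : (fun v => (letter a : Ser K Δ) (b :: v)) = fun _ => 0 := by
        funext v; simp [letter, h]
      rw [this, mulAux_zero_left]; simp [h]

theorem ev_inr (T : X → Ser K Δ) (x : X) (u : List (Δ ⊕ X)) :
    ev T (Sum.inr x :: u) = T x * ev T u := by
  funext w
  refine Eq.trans ?_ (mulAux_eq_sum w (T x) (ev T u)).symm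
  simp only [ev, wordSeries]

theorem ev_append (T : X → Ser K Δ) (u v : List (Δ ⊕ X)) :
    ev T (u ++ v) = ev T u * ev T v := by
  induction u with
  | nil => simp [ev_nil]
  | cons c u ih =>
    cases c with
    | inl a => simp [ev_inl, ih, mul_assoc]
    | inr a => simp [ev_inr, ih, mul_assoc]

/-- Agreement on words of length `< n`. -/
def agree (n : ℕ) (S T : Ser K Δ) : Prop := ∀ w : List Δ, w.length < n → S w = T w

theorem agree_add {n : ℕ} {S S' T T' : Ser K Δ} (h : agree n S S') (h' : agree n T T') :
    agree n (S + T) (S' + T') := fun w hw => by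
  rw [add_app, add_app, h w hw, h' w hw]

theorem agree_sum {n : ℕ} {ι : Type} (s : Finset ι) {f g : ι → Ser K Δ}
    (h : ∀ i ∈ s, agree n (f i) (g i)) : agree n (∑ i ∈ s, f i) (∑ i ∈ s, g i) := fun w hw => by
  rw [sum_app, sum_app]
  exact Finset.sum_congr rfl fun i hi => h i hi w hw

theorem agree_smul {n : ℕ} (c : K) {S S' : Ser K Δ} (h : agree n S S') :
    agree n (c • S) (c • S') := fun w hw => by
  rw [smul_app, smul_app, h w hw]

theorem mulAux_congr (w : List Δ) (S S' T T' : List Δ → K)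
    (h : ∀ v, v.length ≤ w.length → S v = S' v) (h' : ∀ v, v.length ≤ w.length → T v = T' v) :
    mulAux w S T = mulAux w S' T' := by
  induction w generalizing S S' with
  | nil => simp [mulAux, h [] le_rfl, h' [] le_rfl]
  | cons a w ih =>
    rw [mulAux, mulAux, h [] (by simp), h' _ le_rfl, ih]
    · intro v hv; exact h _ (by simpa using hv)
    · intro v hv; exact h' _ (by simp; omega)

theorem mulAux_congr_right (w : List Δ) (S S' q : List Δ → K) (hq : q [] = 0)
    (h : ∀ v, v.length < w.length → S v = S' v) :
    mulAux w S q = mulAux w S' q := by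
  induction w generalizing S S' with
  | nil => simp [mulAux, hq]
  | cons a w ih =>
    rw [mulAux, mulAux, h [] (by simp), ih]
    intro v hv; exact h _ (by simpa using hv)

theorem agree_mul {n : ℕ} {S S' T T' : Ser K Δ} (h : agree n S S') (h' : agree n T T') :
    agree n (S * T) (S' * T') := fun w hw =>
  mulAux_congr w _ _ _ _ (fun v hv => h v (by omega)) (fun v hv => h' v (by omega))

theorem agree_refl (n : ℕ) (S : Ser K Δ) : agree n S S := fun _ _ => rfl

theorem agree_mul_quasi {n : ℕ} {S S' q : Ser K Δ} (hq : q [] = 0) (h : agree n S S') :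
    agree (n + 1) (S * q) (S' * q) := fun w hw =>
  mulAux_congr_right w _ _ _ hq (fun v hv => h v (by omega))

theorem agree_quasi_mul {n : ℕ} {S S' q : Ser K Δ} (hq : q [] = 0) (h : agree n S S') :
    agree (n + 1) (q * S) (q * S') := fun w hw => by
  rw [mul_app, mul_app]
  cases w with
  | nil => simp [mulAux, hq]
  | cons a w =>
    simp only [mulAux, hq, zero_mul, zero_add]
    simp only [List.length_cons] at hw
    exact mulAux_congr w _ _ _ _ (fun v hv => rfl) (fun v hv => h v (by omega))

/-- Contraction. -/
def Contr {ι : Type} (f : (ι → Ser K Δ) → (ι → Ser K Δ)) : Prop :=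
  ∀ n S S', (∀ i, agree n (S i) (S' i)) → ∀ i, agree (n + 1) (f S i) (f S' i)

theorem Contr.unique {ι : Type} {f : (ι → Ser K Δ) → (ι → Ser K Δ)} (hf : Contr f)
    {S S' : ι → Ser K Δ} (h : S = f S) (h' : S' = f S') : S = S' := by
  have key : ∀ n, ∀ i, agree n (S i) (S' i) := by
    intro n
    induction n with
    | zero => intro i w hw; simp at hw
    | succ n ih => rw [h, h']; exact hf n _ _ ih
  funext i w
  exact key (w.length + 1) i w (by omega)

theorem Contr.exists {ι : Type} {f : (ι → Ser K Δ) → (ι → Ser K Δ)} (hf : Contr f) :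
    ∃ S, S = f S := by
  let Z : ℕ → ι → Ser K Δ := fun n => f^[n] 0
  have hZ : ∀ n, Z (n + 1) = f (Z n) := fun n => Function.iterate_succ_apply' f n 0
  have h1 : ∀ n i, agree n (Z n i) (Z (n + 1) i) := by
    intro n
    induction n with
    | zero => intro i w hw; simp at hw
    | succ n ih => rw [hZ (n + 1), hZ n]; exact hf n _ _ (by rw [← hZ n]; exact ih)
  have h2 : ∀ n d i, agree n (Z n i) (Z (n + d) i) := by
    intro n d
    induction d with
    | zero => intro i w hw; rfl
    | succ d ih =>
      intro i w hw
      rw [ih i w hw]; exact h1 (n + d) i w (by omega)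
  let S : ι → Ser K Δ := fun i w => Z (w.length + 1) i w
  have h3 : ∀ n i, agree n (S i) (Z n i) := by
    intro n i w hw
    obtain ⟨d, rfl⟩ := Nat.exists_eq_add_of_le (show w.length + 1 ≤ n by omega)
    exact h2 (w.length + 1) d i w (by omega)
  refine ⟨S, ?_⟩
  funext i w
  have a := h3 (w.length + 1) i w (by omega)
  have b := hf w.length _ _ (h3 w.length) i w (by omega)
  rw [a, b, hZ]

open Matrix in
theorem contr_vecMul [Fintype X] (Q : Matrix X X (Ser K Δ)) (hQ : ∀ i j, Q i j [] = 0)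
    (v : X → Ser K Δ) : Contr (fun y : X → Ser K Δ => v + y ᵥ* Q) := by
  intro n S S' h i
  refine agree_add (agree_refl _ _) ?_
  simp only [Matrix.vecMul, dotProduct]
  exact agree_sum _ fun j _ => agree_mul_quasi (hQ j i) (h j)

open Matrix in
theorem contr_mulVec [Fintype X] (Q : Matrix X X (Ser K Δ)) (hQ : ∀ i j, Q i j [] = 0)
    (v : X → Ser K Δ) : Contr (fun y : X → Ser K Δ => v + Q *ᵥ y) := by
  intro n S S' h i
  refine agree_add (agree_refl _ _) ?_
  simp only [Matrix.mulVec, dotProduct]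
  exact agree_sum _ fun j _ => agree_quasi_mul (hQ i j) (h j)

open Matrix in
theorem exists_plus [Fintype X] (Q : Matrix X X (Ser K Δ)) (hQ : ∀ i j, Q i j [] = 0) :
    ∃ Z : Matrix X X (Ser K Δ), Z = Q + Z * Q ∧ Z = Q + Q * Z := by
  choose Z hZ using fun i => (contr_vecMul Q hQ (Q i)).exists
  let Z' : Matrix X X (Ser K Δ) := Matrix.of Z
  have h1 : Z' = Q + Z' * Q := funext fun i => hZ i
  refine ⟨Z', h1, ?_⟩
  have h2 : Q + Q * Z' = Q + (Q + Q * Z') * Q := by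
    conv_lhs => rw [h1]
    simp only [mul_add, add_mul, Matrix.mul_assoc]
  funext i
  exact (contr_vecMul Q hQ (Q i)).unique (hZ i) (congrFun h2 i)

end Basic

section Alg

variable {K Δ : Type} [CommSemiring K] {X : Type}

variable (K Δ) in
/-- Span of the letters. -/
noncomputable def L : Submodule K (Ser K Δ) := Submodule.span K (Set.range letter)

/-- Polynomials in letters and `T`. -/
noncomputable def B (T : X → Ser K Δ) : Submodule K (Ser K Δ) :=
  Submodule.span K (Set.range (ev T))

theorem ev_mem (T : X → Ser K Δ) (u) : ev T u ∈ B T := Submodule.subset_span ⟨u, rfl⟩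

theorem one_le_B (T : X → Ser K Δ) : 1 ≤ B T := by
  rw [Submodule.one_le, ← ev_nil T]; exact ev_mem _ _

theorem B_mul_B (T : X → Ser K Δ) : B T * B T ≤ B T := by
  rw [B, Submodule.span_mul_span, Submodule.span_le]
  rintro _ ⟨_, ⟨u, rfl⟩, _, ⟨v, rfl⟩, rfl⟩
  change ev T u * ev T v ∈ _
  rw [← ev_append]; exact ev_mem _ _

theorem letter_mem_L (a : Δ) : (letter a : Ser K Δ) ∈ L K Δ := Submodule.subset_span ⟨a, rfl⟩

theorem L_le_B (T : X → Ser K Δ) : L K Δ ≤ B T := by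
  rw [L, Submodule.span_le]
  rintro _ ⟨a, rfl⟩
  have := ev_mem T [Sum.inl a]
  rwa [ev_inl, ev_nil, mul_one] at this

theorem T_mem_B (T : X → Ser K Δ) (x) : T x ∈ B T := by
  have := ev_mem T [Sum.inr x]
  rwa [ev_inr, ev_nil, mul_one] at this

theorem B_le {Y : Type} (T : X → Ser K Δ) (T' : Y → Ser K Δ) (h : ∀ x, T x ∈ B T') :
    B T ≤ B T' := by
  rw [B, Submodule.span_le]
  rintro _ ⟨u, rfl⟩
  change ev T u ∈ _
  induction u with
  | nil => rw [ev_nil]; exact Submodule.one_le.1 (one_le_B T')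
  | cons c u ih =>
    cases c with
    | inl a =>
      rw [ev_inl]
      exact B_mul_B T' (Submodule.mul_mem_mul (L_le_B T' (letter_mem_L a)) ih)
    | inr x =>
      rw [ev_inr]
      exact B_mul_B T' (Submodule.mul_mem_mul (h x) ih)

theorem mulL {P Q R : Submodule K (Ser K Δ)} (h : P ≤ Q) : P * R ≤ Q * R :=
  Submodule.mul_le.2 fun _ hm _ hn => Submodule.mul_mem_mul (h hm) hn

theorem mulR {P Q R : Submodule K (Ser K Δ)} (h : P ≤ Q) : R * P ≤ R * Q :=
  Submodule.mul_le.2 fun _ hm _ hn => Submodule.mul_mem_mul hm (h hn)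

variable (K Δ) in
/-- Quasiregular series. -/
noncomputable def Quasi : Submodule K (Ser K Δ) where
  carrier := {S | S [] = 0}
  zero_mem' := rfl
  add_mem' := fun {S T} (hS : S [] = 0) (hT : T [] = 0) => by
    change (S + T) [] = 0
    rw [add_app, hS, hT, add_zero]
  smul_mem' := fun c S (hS : S [] = 0) => by
    change (c • S) [] = 0
    rw [smul_app, hS, mul_zero]

theorem quasi_mul {P R : Submodule K (Ser K Δ)} (h : P ≤ Quasi K Δ) : P * R ≤ Quasi K Δ :=
  Submodule.mul_le.2 fun m hm n _ => by
    have h0 : m [] = 0 := h hm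
    change m [] * n [] = 0
    rw [h0, zero_mul]

/-- Double Greibach polynomials. -/
noncomputable def M (T : X → Ser K Δ) : Submodule K (Ser K Δ) := L K Δ ⊔ L K Δ * B T * L K Δ

theorem LB_le_B (T : X → Ser K Δ) : L K Δ * B T ≤ B T :=
  (mulL (L_le_B T)).trans (B_mul_B T)

theorem M_le_LB (T : X → Ser K Δ) : M T ≤ L K Δ * B T := by
  refine sup_le ?_ ?_
  · calc L K Δ = L K Δ * 1 := (mul_one _).symm
      _ ≤ _ := mulR (one_le_B T)
  · rw [mul_assoc]
    exact mulR ((mulR (L_le_B T)).trans (B_mul_B T))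

theorem LBM_le_M (T : X → Ser K Δ) : L K Δ * B T * M T ≤ M T := by
  conv_lhs => rw [M]
  rw [Submodule.mul_sup]
  refine sup_le le_sup_right (le_trans ?_ le_sup_right)
  calc L K Δ * B T * (L K Δ * B T * L K Δ) = L K Δ * (B T * (L K Δ * B T)) * L K Δ := by
        simp only [mul_assoc]
    _ ≤ _ := mulL (mulR
        ((mulR (LB_le_B T)).trans (B_mul_B T)))

theorem LBB (T : X → Ser K Δ) {p b : Ser K Δ} (hp : p ∈ L K Δ * B T) (hb : b ∈ B T) :
    p * b ∈ L K Δ * B T := by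
  have := Submodule.mul_mem_mul hp hb
  rw [mul_assoc] at this
  exact mulR (B_mul_B T) this

theorem nil_of_LB (T : X → Ser K Δ) {p : Ser K Δ} (hp : p ∈ L K Δ * B T) : p [] = 0 := by
  refine quasi_mul ?_ hp
  rw [L, Submodule.span_le]
  rintro _ ⟨a, rfl⟩
  exact letter_nil a

/-- Left step. -/
theorem left_step [Fintype X] (x : X → Ser K Δ) (hx : ∀ i, x i [] = 0)
    (Bp : Submodule K (Ser K Δ))
    (hBp : Bp = L K Δ * B x ⊔ Submodule.span K (Set.range x) * B x)
    (q : Matrix X X (Ser K Δ)) (r : X → Ser K Δ)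
    (hq : ∀ i j, q i j ∈ Bp) (hr : ∀ i, r i ∈ L K Δ * B x)
    (heq : x = r + Matrix.vecMul x q) :
    ∃ T : (X ⊕ X × X) → Ser K Δ, (∀ i, T (Sum.inl i) = x i) ∧ ∀ y, T y ∈ L K Δ * B T := by
  have hBp0 : ∀ p ∈ Bp, p [] = 0 := by
    intro p hp
    rw [hBp] at hp
    obtain ⟨a, ha, b, hb, rfl⟩ := Submodule.mem_sup.1 hp
    rw [add_app, nil_of_LB x ha, zero_add]
    refine quasi_mul ?_ hb
    rw [Submodule.span_le]
    rintro _ ⟨a, rfl⟩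
    exact hx a
  have hq0 : ∀ i j, q i j [] = 0 := fun i j => hBp0 _ (hq i j)
  obtain ⟨Z, hZ1, hZ2⟩ := exists_plus q hq0
  have hxZ : x = r + Matrix.vecMul r Z := by
    refine (contr_vecMul q hq0 r).unique heq ?_
    change _ = r + Matrix.vecMul (r + Matrix.vecMul r Z) q
    conv_lhs => rw [hZ1]
    rw [Matrix.add_vecMul, Matrix.vecMul_vecMul, Matrix.vecMul_add]
  let T : (X ⊕ X × X) → Ser K Δ := Sum.elim x (fun p => Z p.1 p.2)
  have hxT : ∀ i, x i ∈ B T := fun i => T_mem_B T (Sum.inl i)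
  have hZT : ∀ i j, Z i j ∈ B T := fun i j => T_mem_B T (Sum.inr (i, j))
  have hBB : B x ≤ B T := B_le x T hxT
  have hLB : L K Δ * B x ≤ L K Δ * B T := mulR hBB
  have h1 : ∀ i, x i ∈ L K Δ * B T := by
    intro i
    rw [hxZ]
    refine Submodule.add_mem _ (hLB (hr i)) ?_
    simp only [Matrix.vecMul, dotProduct]
    exact Submodule.sum_mem _ fun j _ => LBB T (hLB (hr j)) (hZT j i)
  have hqT : ∀ i j, q i j ∈ L K Δ * B T := by
    intro i j
    have := hq i j
    rw [hBp] at this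
    refine (sup_le hLB ?_) this
    rw [Submodule.mul_le]
    intro m hm n hn
    refine LBB T ?_ (hBB hn)
    refine (Submodule.span_le.2 ?_) hm
    rintro _ ⟨k, rfl⟩
    exact h1 k
  refine ⟨T, fun i => rfl, ?_⟩
  rintro (i | ⟨i, j⟩)
  · exact h1 i
  · change Z i j ∈ _
    rw [hZ2]
    refine Submodule.add_mem _ (hqT i j) ?_
    rw [Matrix.mul_apply]
    exact Submodule.sum_mem _ fun k _ => LBB T (hqT i k) (hZT k j)

theorem right_decomp [Fintype X] (T : X → Ser K Δ) {p : Ser K Δ} (hp : p ∈ L K Δ * B T) :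
    ∃ (q : X → Ser K Δ) (r : Ser K Δ), (∀ j, q j ∈ L K Δ * B T) ∧ r ∈ M T ∧
      p = r + ∑ j, q j * T j := by
  classical
  rw [L, B, Submodule.span_mul_span] at hp
  induction hp using Submodule.span_induction with
  | zero => exact ⟨0, 0, fun j => Submodule.zero_mem _, Submodule.zero_mem _, by simp⟩
  | add p p' _ _ h h' =>
    obtain ⟨q, r, hq, hr, rfl⟩ := h
    obtain ⟨q', r', hq', hr', rfl⟩ := h'
    refine ⟨q + q', r + r', fun j => Submodule.add_mem _ (hq j) (hq' j),
      Submodule.add_mem _ hr hr', ?_⟩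
    simp only [Pi.add_apply, add_mul, Finset.sum_add_distrib]
    abel
  | smul c p _ h =>
    obtain ⟨q, r, hq, hr, rfl⟩ := h
    refine ⟨c • q, c • r, fun j => Submodule.smul_mem _ _ (hq j), Submodule.smul_mem _ _ hr, ?_⟩
    simp only [Pi.smul_apply, smul_mul_assoc, smul_add, Finset.smul_sum]
  | mem p h =>
    obtain ⟨_, ⟨a, rfl⟩, _, ⟨u, rfl⟩, rfl⟩ := h
    change ∃ q r, _ ∧ _ ∧ letter a * ev T u = _
    rcases List.eq_nil_or_concat' u with rfl | ⟨v, c, rfl⟩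
    · refine ⟨0, letter a, fun j => Submodule.zero_mem _, ?_, by simp [ev_nil]⟩
      exact (le_sup_left : L K Δ ≤ M T) (letter_mem_L a)
    · have hv : letter a * ev T v ∈ L K Δ * B T :=
        Submodule.mul_mem_mul (letter_mem_L a) (ev_mem T v)
      rcases c with b | j
      · refine ⟨0, letter a * ev T v * letter b, fun j => Submodule.zero_mem _, ?_, ?_⟩
        · exact (le_sup_right : _ ≤ M T) (Submodule.mul_mem_mul hv (letter_mem_L b))
        · simp [ev_append, ev_inl, ev_nil, mul_assoc]
      · refine ⟨Pi.single j (letter a * ev T v), 0, fun k => ?_, Submodule.zero_mem _, ?_⟩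
        · by_cases hk : k = j
          · subst hk; simpa using hv
          · simp [hk]
        · rw [Finset.sum_eq_single j]
          · simp [ev_append, ev_inr, ev_nil, mul_assoc]
          · intro k _ hk; simp [hk]
          · simp

/-- Right step. -/
theorem right_step [Fintype X] (t : X → Ser K Δ) (ht : ∀ i, t i ∈ L K Δ * B t) :
    ∃ T : (X ⊕ X × X) → Ser K Δ, (∀ i, T (Sum.inl i) = t i) ∧ ∀ y, T y ∈ M T := by
  choose q r hq hr heq using fun i => right_decomp t (ht i)
  have hq0 : ∀ i j, q i j [] = 0 := fun i j => nil_of_LB t (hq i j)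
  let Q : Matrix X X (Ser K Δ) := q
  obtain ⟨Z, hZ1, hZ2⟩ := exists_plus Q hq0
  have heq' : t = r + Matrix.mulVec Q t := funext heq
  have htZ : t = r + Matrix.mulVec Z r := by
    refine (contr_mulVec Q hq0 r).unique heq' ?_
    change _ = r + Matrix.mulVec Q (r + Matrix.mulVec Z r)
    conv_lhs => rw [hZ2]
    rw [Matrix.mulVec_add, Matrix.mulVec_mulVec, Matrix.add_mulVec]
  let T : (X ⊕ X × X) → Ser K Δ := Sum.elim t (fun p => Z p.1 p.2)
  have htT : ∀ i, t i ∈ B T := fun i => T_mem_B T (Sum.inl i)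
  have hZT : ∀ i j, Z i j ∈ B T := fun i j => T_mem_B T (Sum.inr (i, j))
  have hBB : B t ≤ B T := B_le t T htT
  have hLB : L K Δ * B t ≤ L K Δ * B T := mulR hBB
  have hMM : M t ≤ M T := sup_le_sup le_rfl (mulL hLB)
  have hqL : ∀ i j, Q i j ∈ L K Δ * B T := fun i j => hLB (hq i j)
  have hZL : ∀ i j, Z i j ∈ L K Δ * B T := by
    intro i j
    rw [hZ2]
    refine Submodule.add_mem _ (hqL i j) ?_
    rw [Matrix.mul_apply]
    exact Submodule.sum_mem _ fun k _ => LBB T (hqL i k) (hZT k j)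
  have mulM : ∀ {a b : Ser K Δ}, a ∈ L K Δ * B T → b ∈ M T → a * b ∈ M T :=
    fun ha hb => LBM_le_M T (Submodule.mul_mem_mul ha hb)
  have h1 : ∀ i, t i ∈ M T := by
    intro i
    rw [htZ]
    refine Submodule.add_mem _ (hMM (hr i)) ?_
    simp only [Matrix.mulVec, dotProduct]
    exact Submodule.sum_mem _ fun j _ => mulM (hZL i j) (hMM (hr j))
  have hQM : ∀ i j, Q i j ∈ M T := by
    intro i j
    change q i j ∈ M T
    obtain ⟨q', r', hq', hr', h⟩ := right_decomp t (hq i j)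
    rw [h]
    exact Submodule.add_mem _ (hMM hr') (Submodule.sum_mem _ fun k _ =>
      mulM (hLB (hq' k)) (h1 k))
  refine ⟨T, fun i => rfl, ?_⟩
  rintro (i | ⟨i, j⟩)
  · exact h1 i
  · change Z i j ∈ _
    rw [hZ1]
    refine Submodule.add_mem _ (hQM i j) ?_
    rw [Matrix.mul_apply]
    exact Submodule.sum_mem _ fun k _ => mulM (hZL i k) (hQM k j)

/-- Words in double Greibach form. -/
def Good (u : List (Δ ⊕ X)) : Prop :=
  (∃ a : Δ, u = [Sum.inl a]) ∨
        (∃ (a b : Δ) (v : List (Δ ⊕ X)), u = Sum.inl a :: (v ++ [Sum.inl b]))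

theorem M_le_span (T : X → Ser K Δ) : M T ≤ Submodule.span K (ev T '' {u | Good u}) := by
  refine sup_le ?_ ?_
  · rw [L, Submodule.span_le]
    rintro _ ⟨a, rfl⟩
    exact Submodule.subset_span ⟨[Sum.inl a], Or.inl ⟨a, rfl⟩, by simp [ev_inl, ev_nil]⟩
  · rw [L, B, Submodule.span_mul_span, Submodule.span_mul_span, Submodule.span_le]
    rintro _ ⟨_, ⟨_, ⟨a, rfl⟩, _, ⟨v, rfl⟩, rfl⟩, _, ⟨b, rfl⟩, rfl⟩
    exact Submodule.subset_span ⟨Sum.inl a :: (v ++ [Sum.inl b]), Or.inr ⟨a, b, v, rfl⟩,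
      by simp [ev_inl, ev_append, ev_nil, mul_assoc]⟩

theorem agree_ev {n : ℕ} {S S' : X → Ser K Δ} (h : ∀ i, agree n (S i) (S' i))
    (u : List (Δ ⊕ X)) : agree n (ev S u) (ev S' u) := by
  induction u with
  | nil => rw [ev_nil, ev_nil]; exact agree_refl _ _
  | cons c u ih =>
    cases c with
    | inl a => rw [ev_inl, ev_inl]; exact agree_mul (agree_refl _ _) ih
    | inr a => rw [ev_inr, ev_inr]; exact agree_mul (h a) ih

theorem isSolution_iff (P : X → List (Δ ⊕ X) → K) (hP : ∀ x, (Function.support (P x)).Finite)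
    (S : X → List Δ → K) : IsSolution P S ↔
      (S : X → Ser K Δ) = fun x => ∑ u ∈ (hP x).toFinset, P x u • ev (S : X → Ser K Δ) u := by
  have key : ∀ x w, (∑ᶠ u : List (Δ ⊕ X), P x u * wordSeries S u w) =
      (∑ u ∈ (hP x).toFinset, P x u • ev (S : X → Ser K Δ) u) w := by
    intro x w
    rw [sum_app, finsum_eq_sum_of_support_subset (s := (hP x).toFinset)]
    · rfl
    · intro u hu
      simp only [Function.mem_support] at hu
      simp only [Set.Finite.coe_toFinset, Function.mem_support]
      exact left_ne_zero_of_mul hu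
  constructor
  · intro h
    funext x w
    rw [← key]; exact h x w
  · intro h x w
    rw [key]; exact congrFun (congrFun h x) w

theorem contr_good (P : X → List (Δ ⊕ X) → K) (hP : ∀ x, (Function.support (P x)).Finite)
    (hG : ∀ x u, P x u ≠ 0 → Good u) :
    Contr (fun (S : X → Ser K Δ) x => ∑ u ∈ (hP x).toFinset, P x u • ev S u) := by
  intro n S S' h x
  refine agree_sum _ fun u hu => agree_smul _ ?_
  have hu' : P x u ≠ 0 := by simpa using hu
  have : ∃ a v, u = Sum.inl a :: v := by
    rcases hG x u hu' with ⟨a, rfl⟩ | ⟨a, b, v, rfl⟩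
    · exact ⟨a, _, rfl⟩
    · exact ⟨a, _, rfl⟩
  obtain ⟨a, v, rfl⟩ := this
  rw [ev_inl, ev_inl]
  exact agree_quasi_mul (letter_nil a) (agree_ev h v)

theorem final_step (T : X → Ser K Δ) (hT : ∀ y, T y ∈ M T) :
    ∃ P : X → List (Δ ⊕ X) → K, (∀ x, (Function.support (P x)).Finite) ∧
      (∀ x u, P x u ≠ 0 → Good u) ∧ IsSolution P T ∧
      (∀ Sol' : X → List Δ → K, IsSolution P Sol' → Sol' = T) := by
  have h := fun y => (Finsupp.mem_span_image_iff_linearCombination K).1 (M_le_span T (hT y))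
  choose l hl hl' using h
  have hfin : ∀ x, (Function.support (l x)).Finite := fun x => (l x).hasFiniteSupport
  have hG : ∀ x u, l x u ≠ 0 → Good u := by
    intro x u hu
    exact (Finsupp.mem_supported _ _).1 (hl x) (by simpa using hu)
  have hsol : IsSolution (fun x u => l x u) T := by
    refine (isSolution_iff _ hfin _).2 ?_
    funext x
    conv_lhs => rw [← hl' x, Finsupp.linearCombination_apply, Finsupp.sum]
    refine Finset.sum_congr ?_ fun _ _ => rfl
    ext u; simp
  refine ⟨fun x u => l x u, hfin, hG, hsol, ?_⟩
  intro S' hS'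
  exact (contr_good _ hfin hG).unique ((isSolution_iff _ hfin _).1 hS')
    ((isSolution_iff _ hfin _).1 hsol)

theorem left_decomp [Fintype X] (x : X → Ser K Δ) (u : List (Δ ⊕ X)) (h0 : u ≠ [])
    (h1 : ∀ y, u ≠ [Sum.inr y]) :
    ∃ (q : X → Ser K Δ) (r : Ser K Δ),
      (∀ j, q j ∈ L K Δ * B x ⊔ Submodule.span K (Set.range x) * B x) ∧ r ∈ L K Δ * B x ∧
      ev x u = r + ∑ j, x j * q j := by
  classical
  rcases u with _ | ⟨a | j, v⟩
  · exact absurd rfl h0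
  · refine ⟨0, ev x (Sum.inl a :: v), fun j => Submodule.zero_mem _, ?_, by simp⟩
    rw [ev_inl]
    exact Submodule.mul_mem_mul (letter_mem_L a) (ev_mem x v)
  · have hv : ev x v ∈ L K Δ * B x ⊔ Submodule.span K (Set.range x) * B x := by
      rcases v with _ | ⟨a | k, v⟩
      · exact absurd rfl (h1 j)
      · rw [ev_inl]
        exact Submodule.mem_sup_left (Submodule.mul_mem_mul (letter_mem_L a) (ev_mem x v))
      · rw [ev_inr]
        exact Submodule.mem_sup_right
          (Submodule.mul_mem_mul (Submodule.subset_span ⟨k, rfl⟩) (ev_mem x v))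
    refine ⟨Pi.single j (ev x v), 0, fun k => ?_, Submodule.zero_mem _, ?_⟩
    · by_cases hk : k = j
      · subst hk; simpa using hv
      · simp [hk]
    · rw [Finset.sum_eq_single j]
      · simp [ev_inr]
      · intro k _ hk; simp [hk]
      · simp

end Alg

end ANF

/-- **Corollary (Kuich–Salomaa).** Every algebraic formal power series is a
component of the (unique) solution of an algebraic system all of whose supports
lie in `Δ ∪ Δ(Δ∪𝒳)*Δ` (such a system is weakly strict, hence has a unique
solution). -/
theorem algebraic_normal_form
    (K Δ : Type) [CommSemiring K]
    (S : List Δ → K) (hS : IsAlgebraicSeries K Δ S) :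
    ∃ (X : Type) (_ : Fintype X) (P : X → List (Δ ⊕ X) → K)
      (Sol : X → List Δ → K),
      (∀ x, (Function.support (P x)).Finite) ∧
      (∀ x u, P x u ≠ 0 →
        (∃ a : Δ, u = [Sum.inl a]) ∨
        (∃ (a b : Δ) (v : List (Δ ⊕ X)), u = Sum.inl a :: (v ++ [Sum.inl b]))) ∧
      IsSolution P Sol ∧
      (∀ Sol' : X → List Δ → K, IsSolution P Sol' → Sol' = Sol) ∧
      ∃ x₀, ∀ w, S w = Sol x₀ w := by
  obtain ⟨X, hX, P, Sol, hfin, hprop, hsol, hnil, x₀, hx₀⟩ := hS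
  let x : X → ANF.Ser K Δ := Sol
  have hsol' := (ANF.isSolution_iff P hfin Sol).1 hsol
  have hdec : ∀ i, ∃ (q : X → ANF.Ser K Δ) (r : ANF.Ser K Δ),
      (∀ j, q j ∈ ANF.L K Δ * ANF.B x ⊔ Submodule.span K (Set.range x) * ANF.B x) ∧
      r ∈ ANF.L K Δ * ANF.B x ∧ x i = r + ∑ j, x j * q j := by
    intro i
    have hd : ∀ u : (hfin i).toFinset, ∃ (q : X → ANF.Ser K Δ) (r : ANF.Ser K Δ),
      (∀ j, q j ∈ ANF.L K Δ * ANF.B x ⊔ Submodule.span K (Set.range x) * ANF.B x) ∧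
      r ∈ ANF.L K Δ * ANF.B x ∧ ANF.ev x u = r + ∑ j, x j * q j := by
      rintro ⟨u, hu⟩
      have hu' : P i u ≠ 0 := by simpa using hu
      refine ANF.left_decomp x u ?_ ?_
      · rintro rfl; exact hu' (hprop i).1
      · rintro y rfl; exact hu' ((hprop i).2 y)
    choose q r hq hr h using hd
    refine ⟨fun j => ∑ u : (hfin i).toFinset, P i u • q u j,
      ∑ u : (hfin i).toFinset, P i u • r u,
      fun j => Submodule.sum_mem _ fun u _ => Submodule.smul_mem _ _ (hq u j),
      Submodule.sum_mem _ fun u _ => Submodule.smul_mem _ _ (hr u), ?_⟩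
    have e : x i = ∑ u ∈ (hfin i).toFinset, P i u • ANF.ev x u := congrFun hsol' i
    rw [e, ← Finset.sum_coe_sort]
    simp only [Finset.mul_sum, mul_smul_comm]
    rw [Finset.sum_comm, ← Finset.sum_add_distrib]
    refine Finset.sum_congr rfl fun u _ => ?_
    rw [h u, smul_add, Finset.smul_sum]
  choose q r hq hr h using hdec
  obtain ⟨T₁, hT₁, hT₁'⟩ := ANF.left_step x hnil _ rfl (fun j i => q i j) r
    (fun i j => hq j i) hr (funext h)
  obtain ⟨T₂, hT₂, hT₂'⟩ := ANF.right_step T₁ hT₁'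
  obtain ⟨P', h1, h2, h3, h4⟩ := ANF.final_step T₂ hT₂'
  refine ⟨_, inferInstance, P', T₂, h1, h2, h3, h4, Sum.inl (Sum.inl x₀), fun w => ?_⟩
  rw [hT₂, hT₁]
  exact hx₀ w
end
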